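/- arXiv:1005.2553 — 3 statements merged into one kernel-verified Lean document; each statement's English description precedes it below -/
import Mathlib

section
/- Let n > 1 and let r = (r_1, …, r_n) ∈ ℕ^n satisfy r_1 + 2r_2 + ⋯ + n·r_n = n and |r| := r_1 + ⋯ + r_n < n. Then the number N of connected nonnesting set partitions of [n] of type r satisfies N · (n − |r| − 1)! · r_1! r_2! ⋯ r_n! = (n − 2)!. -/
/-- A set partition of `[n] = {1, …, n}`, encoded as a `Finpartition` of `Finset.Icc 1 n`. -/
abbrev SetPartitionOn (n : ℕ) := Finpartition (Finset.Icc 1 n)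

/-- `π` has type `r = (r_1, …, r_n)` if for each `i` the number of blocks of size `i` is `r_i`. -/
def HasType {n : ℕ} (π : SetPartitionOn n) (r : Fin n → ℕ) : Prop :=
  ∀ i : Fin n, (π.parts.filter (fun B => B.card = i.1 + 1)).card = r i

/-- `π` is noncrossing: there are no `a < b < c < d` with `a, c` in one block and
`b, d` in a different block. -/
def Noncrossing {n : ℕ} (π : SetPartitionOn n) : Prop :=
  ¬ ∃ a b c d : ℕ, a < b ∧ b < c ∧ c < d ∧
      ∃ B ∈ π.parts, ∃ B' ∈ π.parts, B ≠ B' ∧ a ∈ B ∧ c ∈ B ∧ b ∈ B' ∧ d ∈ B'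

/-- `(i, j)` is an arc of `π`: `i < j` lie in a common block with no element of that
block strictly between them. -/
def IsArc {n : ℕ} (π : SetPartitionOn n) (i j : ℕ) : Prop :=
  i < j ∧ ∃ B ∈ π.parts, i ∈ B ∧ j ∈ B ∧ ∀ k ∈ B, ¬ (i < k ∧ k < j)

/-- `π` is nonnesting: there are no arcs `(a, d)` and `(b, c)` with `a < b < c < d`. -/
def Nonnesting {n : ℕ} (π : SetPartitionOn n) : Prop :=
  ¬ ∃ a b c d : ℕ, a < b ∧ b < c ∧ c < d ∧ IsArc π a d ∧ IsArc π b c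

/-- `i ∈ {1, …, n-1}` is a cut of `π` if no block contains both an element `≤ i` and an
element `> i`. -/
def IsCut {n : ℕ} (π : SetPartitionOn n) (i : ℕ) : Prop :=
  1 ≤ i ∧ i ≤ n - 1 ∧ ∀ B ∈ π.parts, (∀ x ∈ B, x ≤ i) ∨ (∀ x ∈ B, i < x)

/-- `π` is connected if it has no cuts. -/
def Connected {n : ℕ} (π : SetPartitionOn n) : Prop := ∀ i, ¬ IsCut π i

/-- The number of cuts of `π`; `π` has exactly `m` connected components iff this is `m - 1`. -/
noncomputable def cutCount {n : ℕ} (π : SetPartitionOn n) : ℕ := Set.ncard {i : ℕ | IsCut π i}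

/-!
Record for each `x` the size of the block opened by `x`, or `0` if `x` does not open a block.
A nonnesting partition is recovered from this sequence, since every later element has to continue
the unfinished block that has waited longest; the sequences that occur are those of the right total
all of whose partial sums are at least as long as the prefix, and the cuts are the places where
equality holds. So connected nonnesting partitions of `[N + 1]` of type `r` correspond to words of
length `N` and total `N + 1`, with `r k` letters `k` for `k ≥ 1` and `N - |r|` zeros, all of whose
partial sums strictly exceed the length of the prefix (the final entry of the sequence is then `0`).
By the cycle lemma exactly one of the `N` rotations of a word with this content has that property,
so the count is `N! / ((N - |r|)! ∏ r k !)` divided by `N`.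
-/

open Finset
open scoped Nat

section CycleLemma

/- The position is that of the last minimum of `P` within the first period. -/
theorem existsUnique_forall_lt_of_add_period {N : ℕ} (hN : 0 < N) (P : ℕ → ℤ)
    (hP : ∀ i, P (i + N) = P i + 1) :
    ∃! s, s < N ∧ ∀ i, s < i → i ≤ s + N → P s < P i := by
  obtain ⟨m, hmN, hm⟩ := exists_min_image (range N) P ⟨0, mem_range.2 hN⟩
  obtain ⟨s, hs, hlast⟩ := exists_max_image {x ∈ range N | P x = P m} id
    ⟨m, mem_filter.2 ⟨hmN, rfl⟩⟩
  simp only [mem_filter, mem_range, id, and_imp] at hm hs hlast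
  refine ⟨s, ⟨hs.1, fun i hsi hiN => ?_⟩, fun t ⟨htN, ht⟩ => ?_⟩
  · obtain hi | hi := lt_or_ge i N
    · have := hm i hi
      have := mt (hlast i hi)
      grind
    · obtain ⟨k, rfl⟩ := Nat.exists_eq_add_of_le' hi
      have := hP k
      have := hm k (by lia)
      lia
  · have hmin : P s ≤ P t := hs.2 ▸ hm t htN
    obtain hts | hts | hts := lt_trichotomy t s
    · have := ht s hts (by lia)
      lia
    · exact hts
    · have hlt : P s < P t := by
        have := hlast t htN
        grind
      have := ht (s + N) (by lia) (by lia)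
      have := hP s
      lia

/-- A word on `ZMod N`, read from `0` to `N - 1`, is ballot if each nonempty prefix has a sum
exceeding its length. Words are indexed cyclically so that rotations are translations. -/
def IsBallot {N : ℕ} (w : ZMod N → ℕ) : Prop :=
  ∀ i, 1 ≤ i → i ≤ N → i < ∑ j ∈ range i, w j

variable {N : ℕ} [NeZero N]

lemma sum_range_natCast_zmod {M : Type*} [AddCommMonoid M] (w : ZMod N → M) :
    ∑ j ∈ range N, w j = ∑ x, w x := by
  refine sum_nbij' (fun j => (j : ZMod N)) ZMod.val (by simp) (by simp [ZMod.val_lt]) ?_ (by simp)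
    (by simp)
  exact fun j hj => ZMod.val_cast_of_lt (mem_range.1 hj)

theorem existsUnique_isBallot_rotation (w : ZMod N → ℕ) (hw : ∑ x, w x = N + 1) :
    ∃! s : ZMod N, IsBallot fun x => w (x + s) := by
  let P (i : ℕ) : ℤ := (∑ j ∈ range i, w j : ℕ) - i
  have hP (i : ℕ) : P (i + N) = P i + 1 := by
    have : ∑ j ∈ range (i + N), w j = N + 1 + ∑ j ∈ range i, w j := by
      rw [add_comm, sum_range_add, sum_range_natCast_zmod, hw]
      simp
    lia
  have hshift (s : ZMod N) (i : ℕ) :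
      (∑ j ∈ range i, w (j + s) : ℕ) = P (s.val + i) - P s.val + i := by
    have : ∑ j ∈ range (s.val + i), w j = ∑ j ∈ range s.val, w j + ∑ j ∈ range i, w (j + s) := by
      rw [sum_range_add]
      simp [add_comm]
    lia
  have hballot (s : ZMod N) :
      (IsBallot fun x => w (x + s)) ↔ ∀ i, s.val < i → i ≤ s.val + N → P s.val < P i := by
    constructor
    · intro h i hsi hi
      obtain ⟨k, rfl⟩ := Nat.exists_eq_add_of_le hsi.le
      have := h k (by lia) (by lia)
      have := hshift s k
      lia
    · intro h i h1 hi
      have := h (s.val + i) (by lia) (by lia)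
      have := hshift s i
      lia
  obtain ⟨s, ⟨hsN, hs⟩, huniq⟩ := existsUnique_forall_lt_of_add_period (NeZero.pos N) P hP
  refine ⟨s, (hballot s).2 (by rwa [ZMod.val_cast_of_lt hsN]), fun t ht => ?_⟩
  rw [← huniq t.val ⟨ZMod.val_lt t, (hballot t).1 ht⟩, ZMod.natCast_zmod_val]

end CycleLemma

section Content

variable {α ι : Type*} [Fintype α] [DecidableEq ι]

lemma sum_comp_eq_sum_card_fiber_mul [Fintype ι] (g : α → ι) (v : ι → ℕ) :
    ∑ x, v (g x) = ∑ i, v i * #{x | g x = i} := by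
  rw [← sum_fiberwise univ g]
  refine sum_congr rfl fun i _ => ?_
  rw [sum_congr rfl (g := fun _ => v i) (by simp +contextual)]
  simp [mul_comm]

theorem card_fun_of_card_fiber [Fintype ι] (c : ι → ℕ)
    (hc : ∑ i, c i = Fintype.card α) :
    Nat.card {g : α → ι // ∀ i, #{x | g x = i} = c i} * ∏ i, (c i)! = (Fintype.card α)! := by
  classical
  -- A bijection of `α` with `Σ i, Fin (c i)` is a word of content `c` with an enumeration of each
  -- fiber.
  let e : (Σ g : α → ι, ∀ i, {x // g x = i} ≃ Fin (c i)) ≃ (α ≃ Σ i, Fin (c i)) :=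
    { toFun p := (Equiv.sigmaFiberEquiv p.1).symm.trans (Equiv.sigmaCongrRight p.2)
      invFun e := ⟨fun x => (e x).1, fun i =>
        (e.subtypeEquiv fun _ => Iff.rfl).trans (Equiv.sigmaSubtype i)⟩
      left_inv := by
        rintro ⟨g, ε⟩
        refine Sigma.ext rfl (heq_of_eq ?_)
        funext i
        ext ⟨x, rfl⟩
        rfl
      right_inv e := by
        ext x : 1
        rfl }
  have hfiber (g : α → ι) : Nat.card (∀ i, {x // g x = i} ≃ Fin (c i)) =
      if ∀ i, #{x | g x = i} = c i then ∏ i, (c i)! else 0 := by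
    simp_rw [Nat.card_pi, Nat.card_eq_fintype_card]
    split_ifs with hg
    · exact prod_congr rfl fun i _ => by
        rw [Fintype.card_equiv (Fintype.equivFinOfCardEq (by rw [Fintype.card_subtype, hg])),
          Fintype.card_subtype, hg]
    · obtain ⟨i, hi⟩ := not_forall.1 hg
      refine prod_eq_zero (mem_univ i) (Fintype.card_eq_zero_iff.2 ⟨fun ε => hi ?_⟩)
      simpa [Fintype.card_subtype] using Fintype.card_congr ε
  calc _ = ∑ g : α → ι, Nat.card (∀ i, {x // g x = i} ≃ Fin (c i)) := by
        simp only [hfiber, ← sum_filter, sum_const, smul_eq_mul, Nat.card_eq_fintype_card,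
          Fintype.card_subtype]
    _ = Nat.card (α ≃ Σ i, Fin (c i)) := by rw [← Nat.card_sigma, Nat.card_congr e]
    _ = (Fintype.card α)! := by
        rw [Nat.card_eq_fintype_card, Fintype.card_equiv (Fintype.equivOfCardEq (by simp [hc]))]

lemma card_fiber_eq_cons_iff {m : ℕ} (g : α → Fin (m + 1)) (r : Fin m → ℕ) :
    (∀ i, #{x | g x = i} = (Fin.cons (Fintype.card α - ∑ i, r i) r : Fin (m + 1) → ℕ) i) ↔
      ∀ i : Fin m, #{x | g x = i.succ} = r i := by
  have htotal : Fintype.card α = #{x | g x = 0} + ∑ i : Fin m, #{x | g x = i.succ} := by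
    rw [← Fin.sum_univ_succ fun i => #{x | g x = i}]
    exact card_eq_sum_card_fiberwise (by simp)
  simp only [Fin.forall_fin_succ, Fin.cons_zero, Fin.cons_succ, and_iff_right_iff_imp]
  intro h
  simp only [h] at htotal
  lia

end Content

section BallotWords

variable {N : ℕ} [NeZero N] {ι : Type*} [DecidableEq ι]

lemma card_fiber_add_right (g : ZMod N → ι) (s : ZMod N) (i : ι) :
    #{x | g (x + s) = i} = #{x | g x = i} :=
  card_equiv (Equiv.addRight s) (by simp)

variable [Fintype ι]

lemma card_of_card_fiber_eq_mul_card_isBallot (v c : ι → ℕ) (hv : ∑ i, v i * c i = N + 1) :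
    Nat.card {g : ZMod N → ι // ∀ i, #{x | g x = i} = c i} =
      N * Nat.card {g : ZMod N → ι // IsBallot (v ∘ g) ∧ ∀ i, #{x | g x = i} = c i} := by
  classical
  simp only [Nat.card_eq_fintype_card, Fintype.card_subtype]
  -- Double count the pairs of a word and a rotation of it that is ballot.
  have hrot := card_mul_eq_card_mul (s := {g : ZMod N → ι | ∀ i, #{x | g x = i} = c i}) (t := univ)
    (fun g (s : ZMod N) => IsBallot fun x => v (g (x + s))) (m := 1)
    (n := #{g : ZMod N → ι | IsBallot (v ∘ g) ∧ ∀ i, #{x | g x = i} = c i}) ?_ ?_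
  · rwa [mul_one, card_univ, ZMod.card] at hrot
  · intro g hg
    simp only [card_eq_one_iff_existsUnique, mem_bipartiteAbove, mem_univ, true_and]
    apply existsUnique_isBallot_rotation fun x => v (g x)
    simp only [sum_comp_eq_sum_card_fiber_mul, (mem_filter.1 hg).2, hv]
  · intro s _
    refine card_equiv ((Equiv.addRight (-s)).arrowCongr (.refl ι)) fun g => ?_
    simp [mem_bipartiteBelow, card_fiber_add_right, and_comm, Function.comp_def]

theorem card_isBallot_of_card_fiber (v c : ι → ℕ) (hc : ∑ i, c i = N)
    (hv : ∑ i, v i * c i = N + 1) :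
    Nat.card {g : ZMod N → ι // IsBallot (v ∘ g) ∧ ∀ i, #{x | g x = i} = c i} * ∏ i, (c i)! =
      (N - 1)! := by
  have htotal := card_fun_of_card_fiber (α := ZMod N) c (by rw [hc, ZMod.card])
  rw [card_of_card_fiber_eq_mul_card_isBallot v c hv, ZMod.card,
    ← Nat.mul_factorial_pred (NeZero.ne N), mul_assoc] at htotal
  exact Nat.eq_of_mul_eq_mul_left (NeZero.pos N) htotal

end BallotWords

section OpeningSize

variable {α : Type*} [LinearOrder α] {s : Finset α} {π π' : Finpartition s} {x y : α}

/-- The size of the block of `π` opened by `x`, that is, whose least element is `x`; it is `0` if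
`x` is not the least element of a block. -/
def openingSize (π : Finpartition s) (x : α) : ℕ :=
  if ∀ y ∈ π.part x, x ≤ y then #(π.part x) else 0

lemma mem_of_mem_part (h : y ∈ π.part x) : x ∈ s := π.part_nonempty.1 ⟨y, h⟩

lemma part_eq_of_mem_part (h : y ∈ π.part x) : π.part y = π.part x :=
  π.part_eq_of_mem (π.part_mem.2 (mem_of_mem_part h)) h

lemma mem_part_comm : y ∈ π.part x ↔ x ∈ π.part y := by
  simp only [π.mem_part_iff_exists, and_comm]

lemma mem_part_congr {z : α} (h : y ∈ π.part x) : z ∈ π.part x ↔ z ∈ π.part y := by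
  rw [part_eq_of_mem_part h]

lemma parts_eq_image_part (π : Finpartition s) : π.parts = s.image π.part := by
  ext B
  simp only [mem_image]
  refine ⟨fun hB => π.part_surjOn hB, ?_⟩
  rintro ⟨x, hx, rfl⟩
  exact π.part_mem.2 hx

lemma openingSize_ne_zero : openingSize π x ≠ 0 ↔ x ∈ s ∧ ∀ y ∈ π.part x, x ≤ y := by
  simp [openingSize, and_comm]

lemma openingSize_eq_zero_of_notMem (π : Finpartition s) (hx : x ∉ s) : openingSize π x = 0 := by
  by_contra h
  exact hx (openingSize_ne_zero.1 h).1

lemma openingSize_eq_zero_of_lt (hy : y ∈ π.part x) (hyx : y < x) : openingSize π x = 0 := by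
  by_contra h
  exact hyx.not_ge ((openingSize_ne_zero.1 h).2 y hy)

lemma exists_isLeast_part (hx : x ∈ s) : ∃ m, IsLeast (π.part x : Set α) m :=
  ⟨_, (π.part x).isLeast_min' (π.part_nonempty.2 hx)⟩

lemma openingSize_of_isLeast {m : α} (hm : IsLeast (π.part x : Set α) m) :
    openingSize π m = #(π.part x) := by
  rw [openingSize, part_eq_of_mem_part hm.1]
  exact if_pos fun y hy => hm.2 hy

theorem sum_openingSize_le (π : Finpartition s) (i : α) :
    ∑ x ∈ s with x ≤ i, openingSize π x = #{y ∈ s | ∃ x ∈ π.part y, x ≤ i} := by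
  have hunion : {y ∈ s | ∃ x ∈ π.part y, x ≤ i} =
      {x ∈ {x ∈ s | x ≤ i} | ∀ y ∈ π.part x, x ≤ y}.biUnion π.part := by
    ext y
    simp only [mem_filter, mem_biUnion]
    constructor
    · rintro ⟨hy, x, hx, hxi⟩
      obtain ⟨m, hm⟩ := exists_isLeast_part (π := π) hy
      refine ⟨m, ⟨⟨π.part_subset y hm.1, (hm.2 hx).trans hxi⟩, ?_⟩, mem_part_comm.1 hm.1⟩
      rw [part_eq_of_mem_part hm.1]
      exact fun z hz => hm.2 hz
    · rintro ⟨x, ⟨⟨-, hxi⟩, -⟩, hyx⟩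
      exact ⟨π.part_subset x hyx, x, mem_part_comm.1 hyx, hxi⟩
  rw [hunion, card_biUnion]
  · exact (sum_filter _ _).symm
  · intro x hx z hz hxz
    rw [mem_coe, mem_filter] at hx hz
    refine disjoint_left.2 fun y hyx hyz => hxz ?_
    have hzx : z ∈ π.part x := (mem_part_congr hyx).2 (mem_part_comm.1 hyz)
    exact (hx.2 z hzx).antisymm (hz.2 x (mem_part_comm.1 hzx))

theorem card_parts_of_card_eq (π : Finpartition s) (k : ℕ) :
    #{B ∈ π.parts | #B = k + 1} = #{x ∈ s | openingSize π x = k + 1} := by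
  symm
  have hleast {x} (hx : openingSize π x = k + 1) :
      IsLeast (π.part x : Set α) x := by
    have := openingSize_ne_zero.1 (hx.trans_ne k.succ_ne_zero)
    exact ⟨π.mem_part_self.2 this.1, this.2⟩
  refine card_bij (fun x _ => π.part x) (fun x hx => ?_) (fun x hx y hy hxy => ?_) (fun B hB => ?_)
  · rw [mem_filter] at hx ⊢
    exact ⟨π.part_mem.2 hx.1, openingSize_of_isLeast (hleast hx.2) ▸ hx.2⟩
  · rw [mem_filter] at hx hy
    exact (hleast hx.2).unique (hxy ▸ hleast hy.2)
  · rw [mem_filter] at hB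
    obtain ⟨y, hy⟩ := π.nonempty_of_mem_parts hB.1
    obtain rfl := π.part_eq_of_mem hB.1 hy
    obtain ⟨m, hm⟩ := exists_isLeast_part (mem_of_mem_part hy)
    exact ⟨m, by simp [π.part_subset y hm.1, openingSize_of_isLeast hm, hB.2],
      part_eq_of_mem_part hm.1⟩

/-- Nonnesting partitions of a finite subset of a linear order, stated for pairs in a common block
instead of arcs: if `a < b < c < d` with `a, d` in one block and `b, c` in one block, then `a, d` is
not an arc. -/
def IsNonnesting (π : Finpartition s) : Prop :=
  ∀ ⦃a b c d⦄, a < b → b < c → c < d → d ∈ π.part a → c ∈ π.part b →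
    ∃ y ∈ π.part a, a < y ∧ y < d

lemma exists_isGreatest_part_lt (hx : x ∈ s) (h : openingSize π x = 0) :
    ∃ p, IsGreatest {y | y ∈ π.part x ∧ y < x} p := by
  have hne : ({y ∈ π.part x | y < x} : Finset α).Nonempty := by
    by_contra hempty
    refine openingSize_ne_zero.2 ⟨hx, fun y hy => ?_⟩ h
    by_contra! hyx
    exact hempty ⟨y, mem_filter.2 ⟨hy, hyx⟩⟩
  exact ⟨_, by simpa using isGreatest_max' _ hne⟩

lemma exists_next_of_notMem_part (hsize : openingSize π = openingSize π')
    (hbelow : ∀ y < x, ∀ z < x, z ∈ π.part y ↔ z ∈ π'.part y) {p : α} (hpx : p < x)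
    (hp : x ∈ π.part p) (hp' : x ∉ π'.part p) :
    ∃ d ∈ π'.part p, x < d ∧ ∀ y ∈ π'.part p, y < d → y < x := by
  have hcard : #(π.part p) = #(π'.part p) := by
    obtain ⟨m, hm⟩ := exists_isLeast_part (π := π) (mem_of_mem_part hp)
    have hmp : m ≤ p := hm.2 (π.mem_part_self.2 (mem_of_mem_part hp))
    have hm' : m ∈ π'.part p := (hbelow p hpx m (hmp.trans_lt hpx)).1 hm.1
    have hleast : IsLeast (π'.part p : Set α) m := by
      refine ⟨hm', ?_⟩
      rw [← part_eq_of_mem_part hm']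
      apply (openingSize_ne_zero.1 _).2
      rw [← hsize, openingSize_of_isLeast hm]
      exact (card_pos.2 ⟨x, hp⟩).ne'
    rw [← openingSize_of_isLeast hm, ← openingSize_of_isLeast hleast, hsize]
  have hne : ({y ∈ π'.part p | x < y} : Finset α).Nonempty := by
    by_contra hempty
    have hsub : π'.part p ⊂ π.part p := by
      refine (ssubset_iff_of_subset fun y hy => ?_).2 ⟨x, hp, hp'⟩
      obtain hyx | rfl | hxy := lt_trichotomy y x
      · exact (hbelow p hpx y hyx).2 hy
      · exact hp
      · exact absurd ⟨y, mem_filter.2 ⟨hy, hxy⟩⟩ hempty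
    exact (card_lt_card hsub).ne' hcard
  obtain ⟨d, hd, hmin⟩ := exists_min_image _ id hne
  rw [mem_filter] at hd
  refine ⟨d, hd.1, hd.2, fun y hy hyd => ?_⟩
  by_contra! hxy
  obtain rfl | hxy := hxy.eq_or_lt
  · exact hp' hy
  · exact hyd.not_ge (hmin y (mem_filter.2 ⟨hy, hxy⟩))

lemma le_of_isGreatest_part_lt (h' : IsNonnesting π') (hsize : openingSize π = openingSize π')
    (hbelow : ∀ y < x, ∀ z < x, z ∈ π.part y ↔ z ∈ π'.part y) {p q : α}
    (hp : IsGreatest {y | y ∈ π.part x ∧ y < x} p) (hq : q ∈ π'.part x) (hqx : q < x) :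
    q ≤ p := by
  obtain ⟨⟨hp, hpx⟩, hpmax⟩ := hp
  by_contra! hpq
  have hxp : x ∉ π'.part p := by
    intro hxp
    have hqp : q ∈ π.part p := (hbelow p hpx q hqx).2 ((mem_part_congr hxp).2 hq)
    exact hpq.not_ge (hpmax ⟨part_eq_of_mem_part hp ▸ hqp, hqx⟩)
  -- In `π'` the block of `p` skips `x`, so its next element `d` gives an arc `(p, d)` over `q, x`.
  obtain ⟨d, hd, hxd, hnext⟩ :=
    exists_next_of_notMem_part hsize hbelow hpx (mem_part_comm.1 hp) hxp
  obtain ⟨y, hy, hpy, hyd⟩ := h' hpq hqx hxd hd (mem_part_comm.1 hq)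
  have hyx := hnext y hy hyd
  have hyp : y ∈ π.part x := part_eq_of_mem_part hp ▸ (hbelow p hpx y hyx).2 hy
  exact hpy.not_ge (hpmax ⟨hyp, hyx⟩)

lemma IsNonnesting.mem_part_iff_of_lt (h : IsNonnesting π) (h' : IsNonnesting π')
    (hsize : openingSize π = openingSize π')
    (hbelow : ∀ y < x, ∀ z < x, z ∈ π.part y ↔ z ∈ π'.part y) (hx : x ∈ s) (hyx : y < x) :
    y ∈ π.part x ↔ y ∈ π'.part x := by
  by_cases hopen : openingSize π x = 0
  · obtain ⟨p, hp⟩ := exists_isGreatest_part_lt hx hopen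
    obtain ⟨q, hq⟩ := exists_isGreatest_part_lt hx (hsize ▸ hopen)
    have hpq : p ≤ q := le_of_isGreatest_part_lt h hsize.symm
      (fun y hy z hz => (hbelow y hy z hz).symm) hq hp.1.1 hp.1.2
    have hqp : q ≤ p := le_of_isGreatest_part_lt h' hsize hbelow hp hq.1.1 hq.1.2
    obtain rfl := hpq.antisymm hqp
    rw [mem_part_congr hp.1.1, mem_part_congr hq.1.1, hbelow p hp.1.2 y hyx]
  · exact iff_of_false (fun hy => hopen (openingSize_eq_zero_of_lt hy hyx))
      (fun hy => hopen (hsize ▸ openingSize_eq_zero_of_lt hy hyx))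

lemma mem_part_iff_of_forall_lt (hx : ∀ z < x, z ∈ π.part x ↔ z ∈ π'.part x)
    (hy : ∀ z < y, z ∈ π.part y ↔ z ∈ π'.part y) : y ∈ π.part x ↔ y ∈ π'.part x := by
  obtain hyx | rfl | hxy := lt_trichotomy y x
  · exact hx y hyx
  · simp only [π.mem_part_self, π'.mem_part_self]
  · rw [mem_part_comm, hy x hxy, mem_part_comm]

theorem IsNonnesting.ext_openingSize (h : IsNonnesting π) (h' : IsNonnesting π')
    (hsize : openingSize π = openingSize π') : π = π' := by
  have hpast : ∀ x ∈ s, ∀ y < x, y ∈ π.part x ↔ y ∈ π'.part x := fun x hx => by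
    refine s.finite_toSet.wellFoundedOn.induction (r := (· < ·))
      (P := fun x => ∀ y < x, y ∈ π.part x ↔ y ∈ π'.part x) hx fun x hx ih y hyx => ?_
    have hbelow {y} (hyx : y < x) : ∀ z < y, z ∈ π.part y ↔ z ∈ π'.part y := by
      by_cases hy : y ∈ s
      · exact ih y hy hyx
      · simp [π.part_eq_empty.2 hy, π'.part_eq_empty.2 hy]
    exact h.mem_part_iff_of_lt h' hsize
      (fun y hy z hz => mem_part_iff_of_forall_lt (hbelow hy) (hbelow hz)) hx hyx
  have hpart {x} (hx : x ∈ s) : π.part x = π'.part x := by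
    ext y
    by_cases hy : y ∈ s
    · exact mem_part_iff_of_forall_lt (hpast x hx) (hpast y hy)
    · exact iff_of_false (mt (π.part_subset x ·) hy) (mt (π'.part_subset x ·) hy)
  ext1
  rw [parts_eq_image_part π, parts_eq_image_part π', image_congr fun x hx => hpart hx]

end OpeningSize

section Existence

variable {α : Type*} [LinearOrder α] {s : Finset α} {π : Finpartition s} {a j x y : α}

open Classical in
/-- The partition of `insert a s` obtained from `π` by putting a new element `a` into the block of
`j`, or into a block of its own if `j ∉ s` (for instance `j = a`). It is encoded as the kernel of
the map sending `x ∈ s` to its block and `a` to the block of `j`, which is empty if `j ∉ s`. -/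
noncomputable def insertIntoPart (π : Finpartition s) (a j : α) : Finpartition (insert a s) :=
  .ofSetSetoid (Setoid.ker (Function.update π.part a (π.part j))) (insert a s)

lemma part_eq_part_iff (hx : x ∈ s) : π.part y = π.part x ↔ x ∈ π.part y :=
  ⟨fun h => h ▸ π.mem_part_self.2 hx, fun h => (part_eq_of_mem_part h).symm⟩

lemma part_insertIntoPart_self (ha : a ∉ s) :
    (insertIntoPart π a j).part a = insert a (π.part j) := by
  ext y
  rw [insertIntoPart, Finpartition.mem_part_ofSetSetoid_iff_rel, mem_insert, mem_insert]
  obtain rfl | hya := eq_or_ne y a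
  · simp
  · rw [Setoid.ker_def, Function.update_self, Function.update_of_ne hya, mem_insert,
      or_iff_right hya, or_iff_right hya]
    exact ⟨fun ⟨_, hy, h⟩ => (part_eq_part_iff hy).1 h, fun h =>
      ⟨.inl rfl, π.part_subset j h, (part_eq_of_mem_part h).symm⟩⟩

lemma mem_part_insertIntoPart (ha : a ∉ s) (hx : x ∈ s) (hy : y ∈ s) :
    y ∈ (insertIntoPart π a j).part x ↔ y ∈ π.part x := by
  rw [insertIntoPart, Finpartition.mem_part_ofSetSetoid_iff_rel, Setoid.ker_def,
    Function.update_of_ne (ne_of_mem_of_not_mem hx ha),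
    Function.update_of_ne (ne_of_mem_of_not_mem hy ha), part_eq_part_iff hy]
  exact ⟨fun h => h.2.2, fun h => ⟨mem_insert_of_mem hx, mem_insert_of_mem hy, h⟩⟩

lemma part_insertIntoPart_of_notMem_part (ha : a ∉ s) (hx : x ∈ s) (hxj : x ∉ π.part j) :
    (insertIntoPart π a j).part x = π.part x := by
  ext y
  obtain rfl | hya := eq_or_ne y a
  · rw [mem_part_comm, part_insertIntoPart_self ha, mem_insert, or_iff_left hxj]
    exact iff_of_false (ne_of_mem_of_not_mem hx ha) fun h => ha (π.part_subset x h)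
  · by_cases hy : y ∈ s
    · exact mem_part_insertIntoPart ha hx hy
    · refine iff_of_false (fun h => ?_) fun h => hy (π.part_subset x h)
      exact ((mem_insert.1 (Finpartition.part_subset _ _ h)).resolve_left hya |> hy)

lemma openingSize_insertIntoPart_self (ha : ∀ x ∈ s, a < x) :
    openingSize (insertIntoPart π a j) a = #(π.part j) + 1 := by
  have has : a ∉ s := fun h => (ha a h).false
  rw [openingSize, part_insertIntoPart_self has, if_pos, card_insert_of_notMem]
  · exact fun h => has (π.part_subset j h)
  · exact forall_mem_insert _ _ _ |>.2 ⟨le_rfl, fun y hy => (ha y (π.part_subset j hy)).le⟩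

lemma openingSize_insertIntoPart_of_mem (ha : ∀ x ∈ s, a < x) (hx : x ∈ π.part j) :
    openingSize (insertIntoPart π a j) x = 0 := by
  have has : a ∉ s := fun h => (ha a h).false
  refine openingSize_eq_zero_of_lt (y := a) ?_ (ha x (π.part_subset j hx))
  rw [mem_part_comm, part_insertIntoPart_self has]
  exact mem_insert_of_mem hx

lemma openingSize_insertIntoPart_of_notMem (ha : a ∉ s) (hx : x ∈ s) (hxj : x ∉ π.part j) :
    openingSize (insertIntoPart π a j) x = openingSize π x := by
  rw [openingSize, openingSize, part_insertIntoPart_of_notMem_part ha hx hxj]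

lemma IsNonnesting.insertIntoPart (h : IsNonnesting π) (ha : ∀ x ∈ s, a < x)
    (hj : ∀ x ∈ s, openingSize π x = 0 → j < x) : IsNonnesting (insertIntoPart π a j) := by
  have has : a ∉ s := fun h => (ha a h).false
  intro u v w z huv hvw hwz hz hw
  have hu : u ∈ insert a s := mem_of_mem_part hz
  have hlt {t} (hut : u < t) (ht : t ∈ insert a s) : t ∈ s := by
    obtain rfl | ht := mem_insert.1 ht
    · obtain rfl | hu := mem_insert.1 hu
      · exact absurd hut (lt_irrefl _)
      · exact absurd hut (ha u hu).not_gt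
    · exact ht
  have hvs : v ∈ s := hlt huv (mem_of_mem_part hw)
  have hws : w ∈ s := hlt (huv.trans hvw) (Finpartition.part_subset _ _ hw)
  have hzs : z ∈ s := hlt (huv.trans (hvw.trans hwz)) (Finpartition.part_subset _ _ hz)
  have hwv : w ∈ π.part v := (mem_part_insertIntoPart has hvs hws).1 hw
  obtain rfl | hus := mem_insert.1 hu
  · rw [part_insertIntoPart_self has] at hz ⊢
    have hzj : z ∈ π.part j := mem_of_mem_insert_of_ne hz (huv.trans (hvw.trans hwz)).ne'
    have hjs : j ∈ s := mem_of_mem_part hzj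
    have hjw : j < w := hj w hws (openingSize_eq_zero_of_lt (mem_part_comm.1 hwv) hvw)
    exact ⟨j, mem_insert_of_mem (π.mem_part_self.2 hjs), ha j hjs, hjw.trans hwz⟩
  · obtain ⟨y, hy, huy, hyz⟩ := h huv hvw hwz ((mem_part_insertIntoPart has hus hzs).1 hz) hwv
    exact ⟨y, (mem_part_insertIntoPart has hus (π.part_subset u hy)).2 hy, huy, hyz⟩

lemma sum_update_of_eq_zero (t : Finset α) {c : α → ℕ} (hj : c j = 0) (k : ℕ) :
    ∑ x ∈ t, Function.update c j k x = ∑ x ∈ t, c x + if j ∈ t then k else 0 := by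
  split_ifs with hjt
  · rw [sum_update_of_mem hjt, sdiff_singleton_eq_erase, sum_erase _ hj, add_comm]
  · rw [sum_update_of_notMem hjt, add_zero]

lemma exists_isLeast_eq_zero {c : α → ℕ} (hc : ∑ x ∈ s, c x < #s) :
    ∃ j, IsLeast {x | x ∈ s ∧ c x = 0} j := by
  have hne : ({x ∈ s | c x = 0} : Finset α).Nonempty := by
    by_contra! hempty
    have hone : ∀ x ∈ s, 1 ≤ c x := fun x hx =>
      Nat.one_le_iff_ne_zero.2 (filter_eq_empty_iff.1 hempty hx)
    exact hc.not_ge (card_eq_sum_ones s ▸ sum_le_sum hone)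
  exact ⟨_, by simpa using isLeast_min' _ hne⟩

lemma card_filter_add_one_le {c : α → ℕ} (ha : ∀ x ∈ s, a < x)
    (hc : ∀ i ∈ insert a s, #{x ∈ insert a s | x ≤ i} ≤ ∑ x ∈ insert a s with x ≤ i, c x)
    {i : α} (hi : i ∈ s) : #{x ∈ s | x ≤ i} + 1 ≤ c a + ∑ x ∈ s with x ≤ i, c x := by
  have has : a ∉ s := fun h => (ha a h).false
  have hci := hc i (mem_insert_of_mem hi)
  rwa [filter_insert, if_pos (ha i hi).le, sum_insert (by simp [has]),
    card_insert_of_notMem (by simp [has])] at hci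

lemma card_filter_le_sum_update {c : α → ℕ}
    (hc : ∀ i ∈ s, #{x ∈ s | x ≤ i} + 1 ≤ c a + ∑ x ∈ s with x ≤ i, c x)
    (hj : IsLeast {x | x ∈ s ∧ c x = 0} j) {i : α} (hi : i ∈ s) :
    #{x ∈ s | x ≤ i} ≤ ∑ x ∈ s with x ≤ i, Function.update c j (c a - 1) x := by
  rw [sum_update_of_eq_zero _ hj.1.2]
  obtain hij | hji := lt_or_ge i j
  · refine le_add_right (card_eq_sum_ones _ ▸ sum_le_sum fun x hx => Nat.one_le_iff_ne_zero.2 ?_)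
    rw [mem_filter] at hx
    exact fun h => (hx.2.trans_lt hij).not_ge (hj.2 ⟨hx.1, h⟩)
  · rw [if_pos (mem_filter.2 ⟨hj.1.1, hji⟩)]
    have := hc i hi
    lia

lemma openingSize_insertIntoPart_of_update {c : α → ℕ} (ha : ∀ x ∈ s, a < x) (hca : 1 < c a)
    (hjs : j ∈ s) (hj : c j = 0)
    (hsize : ∀ x ∈ s, openingSize π x = Function.update c j (c a - 1) x)
    (hx : x ∈ insert a s) : openingSize (insertIntoPart π a j) x = c x := by
  have has : a ∉ s := fun h => (ha a h).false
  have hsizej : openingSize π j = c a - 1 := by rw [hsize j hjs, Function.update_self]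
  have hopen : ∀ y ∈ π.part j, j ≤ y := (openingSize_ne_zero.1 (by lia)).2
  have hjj : j ∈ π.part j := π.mem_part_self.2 hjs
  obtain rfl | hxs := mem_insert.1 hx
  · rw [openingSize_insertIntoPart_self ha, ← openingSize_of_isLeast ⟨hjj, hopen⟩, hsizej]
    lia
  obtain rfl | hxj := eq_or_ne x j
  · rw [openingSize_insertIntoPart_of_mem ha hjj, hj]
  by_cases hxB : x ∈ π.part j
  · rw [openingSize_insertIntoPart_of_mem ha hxB, ← Function.update_of_ne hxj (c a - 1) c,
      ← hsize x hxs]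
    exact (openingSize_eq_zero_of_lt (mem_part_comm.1 hxB) ((hopen x hxB).lt_of_ne' hxj)).symm
  · rw [openingSize_insertIntoPart_of_notMem has hxs hxB, hsize x hxs, Function.update_of_ne hxj]

theorem exists_isNonnesting_openingSize_eq (c : α → ℕ)
    (hc : ∀ i ∈ s, #{x ∈ s | x ≤ i} ≤ ∑ x ∈ s with x ≤ i, c x) (hsum : ∑ x ∈ s, c x = #s) :
    ∃ π : Finpartition s, IsNonnesting π ∧ ∀ x ∈ s, openingSize π x = c x := by
  induction s using Finset.induction_on_min generalizing c with
  | empty => exact ⟨⊥, fun a b c d _ _ _ hd => absurd (mem_of_mem_part hd) (by simp), by simp⟩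
  | insert a s ha ih =>
    have has : a ∉ s := fun h => (ha a h).false
    have hcs : ∀ i ∈ s, #{x ∈ s | x ≤ i} + 1 ≤ c a + ∑ x ∈ s with x ≤ i, c x :=
      fun i hi => card_filter_add_one_le ha hc hi
    have hca : 1 ≤ c a := by
      have hle : {x ∈ insert a s | x ≤ a} = {a} := by
        rw [filter_insert, if_pos le_rfl, filter_eq_empty_iff.2 fun x hx => (ha x hx).not_ge,
          insert_empty]
      simpa [hle] using hc a (mem_insert_self a s)
    rw [sum_insert has, card_insert_of_notMem has] at hsum
    obtain hca | hca := hca.eq_or_lt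
    · obtain ⟨π, hπ, hsize⟩ := ih c (fun i hi => by have := hcs i hi; lia) (by lia)
      have hempty : π.part a = ∅ := π.part_eq_empty.2 has
      refine ⟨insertIntoPart π a a, hπ.insertIntoPart ha fun x hx _ => ha x hx,
        (forall_mem_insert _ _ _).2 ⟨?_, fun x hx => ?_⟩⟩
      · rw [openingSize_insertIntoPart_self ha, hempty, card_empty, ← hca]
      · rw [openingSize_insertIntoPart_of_notMem has hx (by simp [hempty]), hsize x hx]
    -- Removing `a` from the block it opens makes the next element `j` of that block its minimum.
    · obtain ⟨j, hj⟩ := exists_isLeast_eq_zero (s := s) (c := c) (by lia)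
      obtain ⟨π, hπ, hsize⟩ := ih (Function.update c j (c a - 1))
        (fun i hi => card_filter_le_sum_update hcs hj hi)
        (by rw [sum_update_of_eq_zero _ hj.1.2, if_pos hj.1.1]; lia)
      refine ⟨insertIntoPart π a j, hπ.insertIntoPart ha fun x hx hx0 => ?_, fun x hx =>
        openingSize_insertIntoPart_of_update ha hca hj.1.1 hj.1.2 hsize hx⟩
      rw [hsize x hx] at hx0
      have hxj : x ≠ j := by
        rintro rfl
        rw [Function.update_self] at hx0
        lia
      rw [Function.update_of_ne hxj] at hx0
      exact (hj.2 ⟨hx, hx0⟩).lt_of_ne' hxj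

end Existence

section Interval

variable {n : ℕ} {π : SetPartitionOn n}

lemma isArc_iff {i j : ℕ} :
    IsArc π i j ↔ i < j ∧ j ∈ π.part i ∧ ∀ k ∈ π.part i, ¬(i < k ∧ k < j) := by
  refine and_congr_right fun _ => ⟨?_, fun ⟨hj, hk⟩ => ?_⟩
  · rintro ⟨B, hB, hi, hj, hk⟩
    obtain rfl := π.part_eq_of_mem hB hi
    exact ⟨hj, hk⟩
  · have hi := mem_of_mem_part hj
    exact ⟨_, π.part_mem.2 hi, π.mem_part_self.2 hi, hj, hk⟩

theorem isNonnesting_iff_nonnesting : IsNonnesting π ↔ Nonnesting π := by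
  constructor
  · rintro h ⟨a, b, c, d, hab, hbc, hcd, had, hbc'⟩
    rw [isArc_iff] at had hbc'
    obtain ⟨y, hy, hay, hyd⟩ := h hab hbc hcd had.2.1 hbc'.2.1
    exact had.2.2 y hy ⟨hay, hyd⟩
  · intro h a b c d hab hbc hcd hd hc
    by_contra! hgap
    obtain ⟨e, he, hmin⟩ := exists_min_image {y ∈ π.part b | b < y} id ⟨c, mem_filter.2 ⟨hc, hbc⟩⟩
    simp only [mem_filter, id, and_imp] at he hmin
    refine h ⟨a, b, e, d, hab, he.2, (hmin c hc hbc).trans_lt hcd, ?_, ?_⟩ <;> rw [isArc_iff]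
    · exact ⟨hab.trans (hbc.trans hcd), hd, fun k hk hk' => (hgap k hk hk'.1).not_gt hk'.2⟩
    · exact ⟨he.2, he.1, fun k hk hk' => (hmin k hk hk'.1).not_gt hk'.2⟩

lemma filter_Icc_one_le {i : ℕ} (hi : i ≤ n) : {x ∈ Icc 1 n | x ≤ i} = Icc 1 i := by
  ext x
  simp only [mem_filter, mem_Icc]
  lia

lemma sum_Icc_openingSize (π : SetPartitionOn n) {i : ℕ} (hi : i ≤ n) :
    ∑ x ∈ Icc 1 i, openingSize π x = #{y ∈ Icc 1 n | ∃ x ∈ π.part y, x ≤ i} := by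
  rw [← filter_Icc_one_le hi, sum_openingSize_le]

lemma sum_openingSize (π : SetPartitionOn n) : ∑ x ∈ Icc 1 n, openingSize π x = n := by
  rw [sum_Icc_openingSize π le_rfl, filter_true_of_mem, Nat.card_Icc, Nat.add_sub_cancel]
  exact fun y hy => ⟨y, π.mem_part_self.2 hy, (mem_Icc.1 hy).2⟩

lemma isCut_iff_sum_openingSize_le {i : ℕ} (h1 : 1 ≤ i) (hi : i < n) :
    IsCut π i ↔ ∑ x ∈ Icc 1 i, openingSize π x ≤ i := by
  have hsub : Icc 1 i ⊆ {y ∈ Icc 1 n | ∃ x ∈ π.part y, x ≤ i} := by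
    intro y hy
    have hyn : y ∈ Icc 1 n := Icc_subset_Icc_right hi.le hy
    exact mem_filter.2 ⟨hyn, y, π.mem_part_self.2 hyn, (mem_Icc.1 hy).2⟩
  rw [sum_Icc_openingSize π hi.le]
  constructor
  · rintro ⟨-, -, hcut⟩
    refine (card_le_card (t := Icc 1 i) fun y hy => ?_).trans_eq (by simp)
    obtain ⟨hyn, x, hx, hxi⟩ := mem_filter.1 hy
    have hyi := ((hcut _ (π.part_mem.2 hyn)).resolve_right fun h => (h x hx).not_ge hxi) y
      (π.mem_part_self.2 hyn)
    exact mem_Icc.2 ⟨(mem_Icc.1 hyn).1, hyi⟩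
  · intro hcard
    have heq := eq_of_subset_of_card_le hsub (by simpa)
    refine ⟨h1, by lia, fun B hB => or_iff_not_imp_right.2 fun hx y hy => ?_⟩
    push Not at hx
    obtain ⟨x, hx, hxi⟩ := hx
    obtain rfl := π.part_eq_of_mem hB hy
    have : y ∈ Icc 1 i := heq ▸ mem_filter.2 ⟨mem_of_mem_part hx, x, hx, hxi⟩
    exact (mem_Icc.1 this).2

theorem connected_iff_lt_sum_openingSize :
    Connected π ↔ ∀ i, 1 ≤ i → i < n → i < ∑ x ∈ Icc 1 i, openingSize π x := by
  refine forall_congr' fun i => ⟨fun h h1 hi => ?_, fun h hcut => ?_⟩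
  · rwa [isCut_iff_sum_openingSize_le h1 hi, not_le] at h
  · obtain ⟨h1, hi, -⟩ := id hcut
    exact ((isCut_iff_sum_openingSize_le h1 (by lia)).1 hcut).not_gt (h h1 (by lia))

lemma openingSize_le (π : SetPartitionOn n) (x : ℕ) : openingSize π x ≤ n := by
  rw [openingSize]
  split_ifs
  · simpa using card_le_card (π.part_subset x)
  · exact n.zero_le

end Interval

section OpeningWord

variable {N : ℕ}

lemma zmod_val_natCast_sub_one_add_one {y : ℕ} (hy : y ∈ Icc 1 N) :
    ((y : ZMod N) - 1).val + 1 = y := by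
  obtain ⟨h1, hyN⟩ := mem_Icc.1 hy
  rw [← Nat.cast_pred h1, ZMod.val_cast_of_lt (by lia), Nat.sub_add_cancel h1]

lemma sum_range_comp_zmod_val_add_one (c : ℕ → ℕ) {i : ℕ} (hi : i ≤ N) :
    ∑ j ∈ range i, c ((j : ZMod N).val + 1) = ∑ x ∈ Icc 1 i, c x := by
  rw [← Ico_add_one_right_eq_Icc, ← sum_Ico_add' c 0 i 1, range_eq_Ico]
  refine sum_congr rfl fun j hj => ?_
  rw [ZMod.val_cast_of_lt ((mem_Ico.1 hj).2.trans_le hi)]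

lemma isBallot_comp_val_add_one_iff (c : ℕ → ℕ) : (IsBallot fun x : ZMod N => c (x.val + 1)) ↔
    ∀ i, 1 ≤ i → i < N + 1 → i < ∑ x ∈ Icc 1 i, c x := by
  refine forall₂_congr fun i _ => ?_
  rw [Nat.lt_succ_iff]
  refine forall_congr' fun hi => ?_
  rw [sum_range_comp_zmod_val_add_one c hi]

/-- The word of opening sizes of the elements `1, …, N` of `[N + 1]`. The element `N + 1`, whose
opening size is `0` in a connected partition, is left out; position `x` stands for `x + 1`. -/
def openingWord (π : SetPartitionOn (N + 1)) (x : ZMod N) : Fin (N + 2) :=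
  ⟨openingSize π (x.val + 1), Nat.lt_succ_of_le (openingSize_le π _)⟩

variable {π : SetPartitionOn (N + 1)}

lemma connected_iff_isBallot_openingWord : Connected π ↔ IsBallot (Fin.val ∘ openingWord π) :=
  connected_iff_lt_sum_openingSize.trans (isBallot_comp_val_add_one_iff (openingSize π)).symm

variable [NeZero N]

lemma openingSize_last_of_connected (h : Connected π) : openingSize π (N + 1) = 0 := by
  have hN := connected_iff_lt_sum_openingSize.1 h N NeZero.one_le N.lt_succ_self
  have htotal := sum_openingSize π
  rw [sum_Icc_succ_top (by lia)] at htotal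
  lia

lemma card_parts_of_connected (h : Connected π) (i : Fin (N + 1)) :
    #{B ∈ π.parts | #B = i + 1} = #{x | openingWord π x = i.succ} := by
  rw [card_parts_of_card_eq]
  have hmem {y : ℕ} (hy : y ∈ ({y ∈ Icc 1 (N + 1) | openingSize π y = i + 1} : Finset ℕ)) :
      y ∈ Icc 1 N ∧ openingSize π y = i + 1 := by
    obtain ⟨hyN, hsize⟩ := mem_filter.1 hy
    have hlast : y ≠ N + 1 := by
      rintro rfl
      simp [openingSize_last_of_connected h] at hsize
    rw [mem_Icc] at hyN ⊢
    exact ⟨by lia, hsize⟩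
  refine card_nbij' (fun y => (y : ZMod N) - 1) (fun x => x.val + 1) (fun y hy => ?_)
    (fun x hx => ?_) (fun y hy => zmod_val_natCast_sub_one_add_one (hmem hy).1)
    (fun x _ => by simp)
  · simp [openingWord, Fin.ext_iff, zmod_val_natCast_sub_one_add_one (hmem hy).1, (hmem hy).2]
  · have hxN := ZMod.val_lt x
    have hsize : openingSize π (x.val + 1) = i + 1 := congrArg Fin.val (mem_filter.1 hx).2
    exact mem_filter.2 ⟨mem_Icc.2 ⟨by lia, by lia⟩, hsize⟩

lemma hasType_iff_card_openingWord (h : Connected π) (r : Fin (N + 1) → ℕ) :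
    HasType π r ↔ ∀ i : Fin (N + 1), #{x | openingWord π x = i.succ} = r i := by
  simp only [HasType, card_parts_of_connected h]

lemma openingWord_injOn :
    Set.InjOn (openingWord (N := N)) {π | IsNonnesting π ∧ Connected π} := by
  intro π hπ π' hπ' hword
  refine hπ.1.ext_openingSize hπ'.1 (funext fun y => ?_)
  by_cases hy : y ∈ Icc 1 N
  · simpa [openingWord, zmod_val_natCast_sub_one_add_one hy] using
      congrArg Fin.val (congrFun hword (y - 1))
  obtain rfl | hlast := eq_or_ne y (N + 1)
  · rw [openingSize_last_of_connected hπ.2, openingSize_last_of_connected hπ'.2]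
  · have hy' : y ∉ Icc 1 (N + 1) := by
      rw [mem_Icc] at hy ⊢
      lia
    rw [openingSize_eq_zero_of_notMem π hy', openingSize_eq_zero_of_notMem π' hy']

lemma exists_openingWord_eq (g : ZMod N → Fin (N + 2)) (hg : IsBallot (Fin.val ∘ g))
    (hsum : ∑ x, (g x : ℕ) = N + 1) : ∃ π, IsNonnesting π ∧ openingWord π = g := by
  let c (y : ℕ) : ℕ := if y ≤ N then g (y - 1) else 0
  have hcg (x : ZMod N) : c (x.val + 1) = g x := by simp [c, ZMod.val_lt]
  have htotal : ∑ y ∈ Icc 1 (N + 1), c y = N + 1 := by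
    rw [sum_Icc_succ_top (by lia), ← sum_range_comp_zmod_val_add_one c le_rfl]
    simp only [hcg]
    rw [sum_range_natCast_zmod fun x => (g x : ℕ), hsum]
    simp [c]
  have hballot : ∀ i, 1 ≤ i → i < N + 1 → i < ∑ y ∈ Icc 1 i, c y := by
    rw [← isBallot_comp_val_add_one_iff c]
    simpa only [hcg] using! hg
  have hdom : ∀ i ∈ Icc 1 (N + 1), #{y ∈ Icc 1 (N + 1) | y ≤ i} ≤
      ∑ y ∈ Icc 1 (N + 1) with y ≤ i, c y := by
    intro i hi
    obtain ⟨h1, hi⟩ := mem_Icc.1 hi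
    rw [filter_Icc_one_le hi, Nat.card_Icc, Nat.add_sub_cancel]
    obtain hi | rfl := hi.lt_or_eq
    · exact (hballot i h1 hi).le
    · exact htotal.ge
  obtain ⟨π, hπ, hsize⟩ := exists_isNonnesting_openingSize_eq c hdom (by simp [htotal])
  refine ⟨π, hπ, funext fun x => Fin.ext ?_⟩
  have hx : x.val + 1 ∈ Icc 1 (N + 1) := by
    have := ZMod.val_lt x
    rw [mem_Icc]
    lia
  exact (hsize _ hx).trans (hcg x)

theorem card_connected_nonnesting_eq_card_isBallot (r : Fin (N + 1) → ℕ)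
    (hr : ∑ i, (i.1 + 1) * r i = N + 1) :
    Nat.card {π : SetPartitionOn (N + 1) // Nonnesting π ∧ HasType π r ∧ Connected π} =
      Nat.card {g : ZMod N → Fin (N + 2) //
        IsBallot (Fin.val ∘ g) ∧ ∀ i : Fin (N + 1), #{x | g x = i.succ} = r i} := by
  have hbij : Set.BijOn openingWord {π | Nonnesting π ∧ HasType π r ∧ Connected π}
      {g : ZMod N → Fin (N + 2) |
        IsBallot (Fin.val ∘ g) ∧ ∀ i : Fin (N + 1), #{x | g x = i.succ} = r i} := by
    simp only [← isNonnesting_iff_nonnesting]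
    refine ⟨fun π hπ => ?_,
      fun π hπ π' hπ' => openingWord_injOn ⟨hπ.1, hπ.2.2⟩ ⟨hπ'.1, hπ'.2.2⟩,
      fun g hg => ?_⟩
    · obtain ⟨-, htype, hconn⟩ := hπ
      exact ⟨connected_iff_isBallot_openingWord.1 hconn,
        (hasType_iff_card_openingWord hconn r).1 htype⟩
    · obtain ⟨hballot, hcard⟩ := hg
      have hsum : ∑ x, (g x : ℕ) = N + 1 := by
        rw [sum_comp_eq_sum_card_fiber_mul g Fin.val, Fin.sum_univ_succ]
        simp [hcard, hr]
      obtain ⟨π, hπ, rfl⟩ := exists_openingWord_eq g hballot hsum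
      have hconn := connected_iff_isBallot_openingWord.2 hballot
      exact ⟨π, ⟨hπ, (hasType_iff_card_openingWord hconn r).2 hcard, hconn⟩, rfl⟩
  exact Nat.card_congr hbij.equiv

end OpeningWord

/-- The number `N` of connected nonnesting partitions of `[n]` of type `r` satisfies
`N · (n - |r| - 1)! · r! = (n - 2)!`. -/
theorem card_connected_nonnesting_of_type (n : ℕ) (hn : 1 < n) (r : Fin n → ℕ)
    (hrv : ∑ i, (i.1 + 1) * r i = n) (hr : ∑ i, r i < n) :
    Nat.card {π : SetPartitionOn n // Nonnesting π ∧ HasType π r ∧ Connected π} *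
      (n - (∑ i, r i) - 1).factorial * ∏ i, (r i).factorial = (n - 2).factorial := by
  obtain ⟨N, rfl⟩ : ∃ N, n = N + 1 := ⟨n - 1, by lia⟩
  have : NeZero N := ⟨by lia⟩
  let c : Fin (N + 2) → ℕ := Fin.cons (N - ∑ i, r i) r
  have hc : ∑ i, c i = N := by
    rw [Fin.sum_cons]
    lia
  have hv : ∑ i, i.val * c i = N + 1 := by
    rw [Fin.sum_univ_succ]
    simpa [c] using hrv
  have hcount := card_isBallot_of_card_fiber Fin.val c hc hv
  have hcontent (g : ZMod N → Fin (N + 2)) := card_fiber_eq_cons_iff g r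
  simp only [ZMod.card] at hcontent
  simp only [c, hcontent] at hcount
  rw [card_connected_nonnesting_eq_card_isBallot r hrv, mul_assoc]
  rw [Fin.prod_univ_succ] at hcount
  simpa [Nat.sub_right_comm] using hcount
end

section
/- Let n > 1 and let r = (r_1, …, r_n) ∈ ℕ^n satisfy r_1 + 2r_2 + ⋯ + n·r_n = n and |r| := r_1 + ⋯ + r_n < n. Then the number N of Dyck paths of length 2n with no returns and with ascent type r satisfies N · (n − |r| − 1)! · r_1! r_2! ⋯ r_n! = (n − 2)!. -/
/-- A Dyck path of length `2n`: a list of `2n` steps (`true` = U, `false` = D) with `n` U's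
and `n` D's such that every prefix has at least as many U's as D's. -/
def IsDyckPath (n : ℕ) (l : List Bool) : Prop :=
  l.length = 2 * n ∧ l.count true = n ∧ l.count false = n ∧
    ∀ k, (l.take k).count false ≤ (l.take k).count true

/-- The path `l` has ascent type `r = (r_1, …, r_n)`: for each `i`, the number of maximal
consecutive runs of U-steps of length `i` is `r_i`. -/
def HasAscentType (n : ℕ) (l : List Bool) (r : Fin n → ℕ) : Prop :=
  ∀ i : Fin n, ((l.splitOn false).map List.length).count (i.1 + 1) = r i

/-!
Cutting a path after each down-step turns it into the list `a₁, …, aₙ` of the numbers of up-steps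
preceding the successive down-steps; the path has ascent type `r` iff this list is an arrangement
of the multiset consisting of `r i` copies of each `i` together with `n - |r|` zeros.

Weight each arrangement of a multiset by the product of the factorials of its multiplicities, that
is, count labelled arrangements. Choosing the first entry shows by induction that, among
the arrangements of a multiset of cardinality `m + 1` and sum `m + 1 - h`, those whose path, started
at height `h`, reaches height `0` only at its end have total weight `h * m!`. A path without returns
is such a first passage from height `a₁ - 1`, preceded by `a₁` up-steps and one down-step, and the
sum of `a - 1` over the positive elements `a` of the multiset is its number of zeros, because the
sum of the multiset equals its cardinality.
-/

open scoped Finset Nat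

section Arrangements

variable {α : Type*} [DecidableEq α]

/-- The finite set of the lists that enumerate the multiset `s`. Mathlib's `Multiset.lists` repeats
each of them once per permutation of equal entries. -/
def arrangements (s : Multiset α) : Finset (List α) :=
  s.lists.toFinset

/-- The product of the factorials of the multiplicities of `s`: the number of ways to label an
arrangement of `s` so that equal entries become distinguishable. -/
def countFactorial (s : Multiset α) : ℕ :=
  ∏ x ∈ s.toFinset, (s.count x)!

theorem mem_arrangements {s : Multiset α} {l : List α} : l ∈ arrangements s ↔ ↑l = s := by
  rw [arrangements, Multiset.mem_toFinset, Multiset.mem_lists_iff, Multiset.quot_mk_to_coe, eq_comm]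

theorem arrangements_zero : arrangements (0 : Multiset α) = {[]} := by
  ext l
  simp only [mem_arrangements, Multiset.coe_eq_zero, Finset.mem_singleton]

theorem cons_mem_arrangements {s : Multiset α} {x : α} {l : List α} :
    x :: l ∈ arrangements s ↔ x ∈ s ∧ l ∈ arrangements (s.erase x) := by
  simp only [mem_arrangements, ← Multiset.cons_coe]
  constructor
  · rintro rfl
    exact ⟨Multiset.mem_cons_self x _, (Multiset.erase_cons_head x _).symm⟩
  · rintro ⟨hx, hl⟩
    rw [hl, Multiset.cons_erase hx]

theorem card_filter_arrangements {s : Multiset α} (hs : s ≠ 0) (P : List α → Prop)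
    [DecidablePred P] :
    #{l ∈ arrangements s | P l} =
      ∑ x ∈ s.toFinset, #{l ∈ arrangements (s.erase x) | P (x :: l)} := by
  rw [← Finset.card_sigma]
  refine (Finset.card_bij (fun p _ ↦ p.1 :: p.2) ?_ ?_ ?_).symm
  · rintro ⟨x, l⟩ h
    simpa only [Finset.mem_sigma, Finset.mem_filter, Multiset.mem_toFinset, cons_mem_arrangements,
      and_assoc] using h
  · rintro ⟨x, l⟩ _ ⟨y, l'⟩ _ h
    obtain ⟨rfl, rfl⟩ := List.cons.inj h
    rfl
  · rintro (_ | ⟨x, l⟩) h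
    · exact absurd (mem_arrangements.1 (Finset.mem_filter.1 h).1).symm hs
    · refine ⟨⟨x, l⟩, ?_, rfl⟩
      simpa only [Finset.mem_sigma, Finset.mem_filter, Multiset.mem_toFinset,
        cons_mem_arrangements, and_assoc] using h

theorem countFactorial_eq_prod {s : Multiset α} {t : Finset α} (h : s.toFinset ⊆ t) :
    countFactorial s = ∏ x ∈ t, (s.count x)! := by
  refine Finset.prod_subset h fun x _ hx ↦ ?_
  rw [Multiset.count_eq_zero_of_notMem (mt Multiset.mem_toFinset.2 hx), Nat.factorial_zero]

theorem countFactorial_eq_count_mul_erase {s : Multiset α} {x : α} (hx : x ∈ s) :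
    countFactorial s = s.count x * countFactorial (s.erase x) := by
  have hx' : x ∈ s.toFinset := Multiset.mem_toFinset.2 hx
  rw [countFactorial_eq_prod (Multiset.toFinset_subset.2 (Multiset.erase_subset x s)),
    countFactorial, ← Finset.mul_prod_erase _ _ hx', ← Finset.mul_prod_erase _ _ hx',
    Multiset.count_erase_self, ← mul_assoc, Nat.mul_factorial_pred (Multiset.count_pos.2 hx).ne']
  congr 1
  refine Finset.prod_congr rfl fun y hy ↦ ?_
  rw [Multiset.count_erase_of_ne (Finset.ne_of_mem_erase hy)]

theorem card_filter_arrangements_mul_countFactorial {s : Multiset α} (hs : s ≠ 0)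
    (P : List α → Prop) [DecidablePred P] :
    #{l ∈ arrangements s | P l} * countFactorial s =
      (s.map fun x ↦ #{l ∈ arrangements (s.erase x) | P (x :: l)} *
        countFactorial (s.erase x)).sum := by
  rw [card_filter_arrangements hs, Finset.sum_mul, Finset.sum_multiset_map_count]
  refine Finset.sum_congr rfl fun x hx ↦ ?_
  rw [countFactorial_eq_count_mul_erase (Multiset.mem_toFinset.1 hx), smul_eq_mul]
  ring

end Arrangements

section FirstPassage

/-- The path `l`, started at height `h`, ends at height `0` and is at positive height before. -/
def FirstPassage (h : ℕ) (l : List Bool) : Prop :=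
  (∀ k < l.length, (l.take k).count false < h + (l.take k).count true) ∧
    l.count false = h + l.count true

instance (h : ℕ) : DecidablePred (FirstPassage h) :=
  fun _ ↦ inferInstanceAs (Decidable (_ ∧ _))

/-- The path `l` is a nonempty Dyck path without returns: after its initial up-step, it comes back
to height `0` at its end and not before. -/
def IsPrimeDyckPath (l : List Bool) : Prop :=
  l.head? = some true ∧ FirstPassage 1 l.tail

instance : DecidablePred IsPrimeDyckPath :=
  fun _ ↦ inferInstanceAs (Decidable (_ ∧ _))

variable {h : ℕ} {l : List Bool}

theorem firstPassage_nil : FirstPassage h [] ↔ h = 0 := by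
  simp [FirstPassage, eq_comm]

theorem not_firstPassage_zero_cons (b : Bool) : ¬FirstPassage 0 (b :: l) := fun hl ↦ by
  simpa using hl.1 0 (Nat.succ_pos _)

theorem firstPassage_succ_true_cons :
    FirstPassage (h + 1) (true :: l) ↔ FirstPassage (h + 2) l := by
  rw [FirstPassage, List.length_cons, Nat.forall_lt_succ_left']
  simp [FirstPassage, add_assoc, add_comm 1, add_comm 2]

theorem firstPassage_succ_false_cons :
    FirstPassage (h + 1) (false :: l) ↔ FirstPassage h l := by
  rw [FirstPassage, List.length_cons, Nat.forall_lt_succ_left']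
  simp [FirstPassage, add_right_comm _ 1]

theorem firstPassage_succ_replicate_append (a : ℕ) :
    FirstPassage (h + 1) (List.replicate a true ++ l) ↔ FirstPassage (h + a + 1) l := by
  induction a generalizing h with
  | zero => rfl
  | succ a ih =>
    rw [List.replicate_succ, List.cons_append, firstPassage_succ_true_cons, ih, add_right_comm h 1,
      add_assoc h]

theorem isPrimeDyckPath_true_cons : IsPrimeDyckPath (true :: l) ↔ FirstPassage 1 l := by
  simp only [IsPrimeDyckPath, List.head?_cons, List.tail_cons, true_and]

theorem IsPrimeDyckPath.exists_eq_cons (hl : IsPrimeDyckPath l) :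
    ∃ t, l = true :: t ∧ FirstPassage 1 t := by
  obtain ⟨t, rfl⟩ := List.head?_eq_some_iff.1 hl.1
  exact ⟨t, rfl, hl.2⟩

theorem IsPrimeDyckPath.count_eq_count (hl : IsPrimeDyckPath l) :
    l.count false = l.count true := by
  obtain ⟨t, rfl, -, ht⟩ := hl.exists_eq_cons
  simpa [add_comm] using ht

theorem IsPrimeDyckPath.count_false_take_lt (hl : IsPrimeDyckPath l) {k : ℕ} (hpos : 0 < k)
    (hk : k < l.length) : (l.take k).count false < (l.take k).count true := by
  obtain ⟨t, rfl, ht, -⟩ := hl.exists_eq_cons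
  obtain _ | k := k
  · exact absurd hpos (lt_irrefl 0)
  · simpa [add_comm] using ht k (Nat.lt_of_succ_lt_succ hk)

theorem isDyckPath_and_no_returns_iff {n : ℕ} (hn : 0 < n) :
    (IsDyckPath n l ∧ ∀ k, 0 < k → k < 2 * n → (l.take k).count true ≠ (l.take k).count false) ↔
      IsPrimeDyckPath l ∧ l.length = 2 * n := by
  constructor
  · rintro ⟨⟨hlen, htrue, hfalse, hprefix⟩, hreturn⟩
    refine ⟨?_, hlen⟩
    match l with
    | [] => exact absurd htrue hn.ne
    | false :: t => simpa using hprefix 1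
    | true :: t =>
      rw [isPrimeDyckPath_true_cons]
      simp only [List.length_cons, List.count_cons_self, ne_eq, Bool.true_eq_false,
        not_false_eq_true, List.count_cons_of_ne] at hlen htrue hfalse
      refine ⟨fun k hk ↦ ?_, by omega⟩
      have hle := hprefix (k + 1)
      have hne := hreturn (k + 1) k.succ_pos (by omega)
      simp only [List.take_succ_cons, ne_eq, Bool.true_eq_false, not_false_eq_true,
        List.count_cons_of_ne, List.count_cons_self] at hle hne
      omega
  · rintro ⟨hl, hlen⟩
    have hcount := hl.count_eq_count
    have htotal := l.count_true_add_count_false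
    refine ⟨⟨hlen, by omega, by omega, fun k ↦ ?_⟩,
      fun k hpos hk ↦ (hl.count_false_take_lt hpos (hlen ▸ hk)).ne'⟩
    rcases k.eq_zero_or_pos with rfl | hpos
    · rfl
    rcases lt_or_ge k l.length with hk | hk
    · exact (hl.count_false_take_lt hpos hk).le
    · rw [List.take_of_length_le hk, hcount]

end FirstPassage

section Blocks

/-- The path `U^{a₁} D U^{a₂} D ⋯ U^{aₘ} D` with blocks `L = [a₁, …, aₘ]`. A block `0` encodes a
down-step that follows another down-step or starts the path. -/
def pathOfBlocks (L : List ℕ) : List Bool :=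
  L.flatMap fun a ↦ List.replicate a true ++ [false]

variable {h a : ℕ} {L : List ℕ}

theorem pathOfBlocks_nil : pathOfBlocks [] = [] := rfl

theorem pathOfBlocks_cons :
    pathOfBlocks (a :: L) = List.replicate a true ++ false :: pathOfBlocks L := by
  simp [pathOfBlocks]

theorem pathOfBlocks_zero_cons : pathOfBlocks (0 :: L) = false :: pathOfBlocks L :=
  pathOfBlocks_cons

theorem pathOfBlocks_succ_cons :
    pathOfBlocks ((a + 1) :: L) = true :: pathOfBlocks (a :: L) := by
  simp only [pathOfBlocks_cons, List.replicate_succ, List.cons_append]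

theorem count_false_pathOfBlocks (L : List ℕ) : (pathOfBlocks L).count false = L.length := by
  induction L with
  | nil => rfl
  | cons a L ih => simp [pathOfBlocks_cons, List.count_replicate, ih]

theorem count_true_pathOfBlocks (L : List ℕ) : (pathOfBlocks L).count true = L.sum := by
  induction L with
  | nil => rfl
  | cons a L ih => simp [pathOfBlocks_cons, ih]

theorem map_length_splitOn_pathOfBlocks (L : List ℕ) :
    ((pathOfBlocks L).splitOn false).map List.length = L ++ [0] := by
  induction L with
  | nil => simp [pathOfBlocks_nil]
  | cons a L ih =>
    rw [pathOfBlocks_cons, List.splitOn_append_cons_self_of_not_mem (by simp [List.mem_replicate])]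
    simp [ih]

theorem pathOfBlocks_injective : Function.Injective pathOfBlocks := fun L L' hL ↦ by
  have hsplit := map_length_splitOn_pathOfBlocks L
  rw [hL, map_length_splitOn_pathOfBlocks] at hsplit
  exact (List.append_cancel_right hsplit).symm

theorem hasAscentType_pathOfBlocks {n : ℕ} {r : Fin n → ℕ} :
    HasAscentType n (pathOfBlocks L) r ↔ ∀ i : Fin n, L.count (i.1 + 1) = r i := by
  simp [HasAscentType, map_length_splitOn_pathOfBlocks]

theorem not_firstPassage_zero_pathOfBlocks_cons : ¬FirstPassage 0 (pathOfBlocks (a :: L)) := by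
  cases a with
  | zero => exact not_firstPassage_zero_cons false
  | succ a =>
    rw [pathOfBlocks_succ_cons]
    exact not_firstPassage_zero_cons true

theorem firstPassage_succ_pathOfBlocks_cons :
    FirstPassage (h + 1) (pathOfBlocks (a :: L)) ↔ FirstPassage (h + a) (pathOfBlocks L) := by
  rw [pathOfBlocks_cons, firstPassage_succ_replicate_append, firstPassage_succ_false_cons]

theorem exists_pathOfBlocks_eq_true_cons (hL : FirstPassage (h + 1) (pathOfBlocks L)) :
    ∃ L', pathOfBlocks L' = true :: pathOfBlocks L := by
  obtain _ | ⟨a, L⟩ := L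
  · exact absurd (firstPassage_nil.1 hL) h.succ_ne_zero
  · exact ⟨(a + 1) :: L, pathOfBlocks_succ_cons⟩

theorem FirstPassage.exists_pathOfBlocks {l : List Bool} (hl : FirstPassage h l) :
    ∃ L, pathOfBlocks L = l := by
  induction l generalizing h with
  | nil => exact ⟨[], rfl⟩
  | cons b l ih =>
    obtain _ | h := h
    · exact absurd hl (not_firstPassage_zero_cons b)
    cases b with
    | false =>
      obtain ⟨L, rfl⟩ := ih (firstPassage_succ_false_cons.1 hl)
      exact ⟨0 :: L, pathOfBlocks_zero_cons⟩
    | true =>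
      rw [firstPassage_succ_true_cons] at hl
      obtain ⟨L, rfl⟩ := ih hl
      exact exists_pathOfBlocks_eq_true_cons hl

theorem not_isPrimeDyckPath_pathOfBlocks_zero_cons : ¬IsPrimeDyckPath (pathOfBlocks (0 :: L)) := by
  simp [IsPrimeDyckPath, pathOfBlocks_zero_cons]

theorem isPrimeDyckPath_pathOfBlocks_succ_cons :
    IsPrimeDyckPath (pathOfBlocks ((a + 1) :: L)) ↔ FirstPassage a (pathOfBlocks L) := by
  rw [pathOfBlocks_succ_cons, isPrimeDyckPath_true_cons, ← zero_add 1,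
    firstPassage_succ_pathOfBlocks_cons, zero_add]

theorem IsPrimeDyckPath.exists_pathOfBlocks {l : List Bool} (hl : IsPrimeDyckPath l) :
    ∃ L, pathOfBlocks L = l := by
  obtain ⟨t, rfl, ht⟩ := hl.exists_eq_cons
  obtain ⟨L, rfl⟩ := ht.exists_pathOfBlocks
  exact exists_pathOfBlocks_eq_true_cons ht

end Blocks

section Counting

variable {m : ℕ} {s : Multiset ℕ}

theorem card_firstPassage_mul_countFactorial_of_card_eq_one {h : ℕ} (hcard : s.card = 1)
    (hsum : s.sum + h = 1) :
    #{L ∈ arrangements s | FirstPassage h (pathOfBlocks L)} * countFactorial s = h := by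
  obtain ⟨a, rfl⟩ := Multiset.card_eq_one.1 hcard
  rw [Multiset.sum_singleton] at hsum
  rw [card_filter_arrangements_mul_countFactorial (Multiset.singleton_ne_zero a)]
  obtain _ | h := h
  · simp [not_firstPassage_zero_pathOfBlocks_cons]
  · obtain ⟨rfl, rfl⟩ : a = 0 ∧ h = 0 := by omega
    simp [firstPassage_succ_pathOfBlocks_cons, arrangements_zero, countFactorial,
      Finset.filter_singleton, pathOfBlocks_nil, firstPassage_nil]

theorem card_firstPassage_mul_countFactorial {h : ℕ} (hcard : s.card = m + 1)
    (hsum : s.sum + h = m + 1) :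
    #{L ∈ arrangements s | FirstPassage h (pathOfBlocks L)} * countFactorial s =
      h * m ! := by
  induction m generalizing s h with
  | zero =>
    rw [card_firstPassage_mul_countFactorial_of_card_eq_one hcard hsum, Nat.factorial_zero, mul_one]
  | succ m ih =>
    have hs : s ≠ 0 := Multiset.card_pos.1 (hcard ▸ (m + 1).succ_pos)
    rw [card_filter_arrangements_mul_countFactorial hs]
    obtain _ | h := h
    · simp [not_firstPassage_zero_pathOfBlocks_cons]
    simp only [firstPassage_succ_pathOfBlocks_cons]
    calc (s.map fun a ↦ #{L ∈ arrangements (s.erase a) | FirstPassage (h + a) (pathOfBlocks L)} *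
          countFactorial (s.erase a)).sum
        = (s.map fun a ↦ (h + a) * m !).sum := by
          refine congrArg _ (Multiset.map_congr rfl fun a ha ↦ ih ?_ ?_)
          · rw [Multiset.card_erase_of_mem ha, hcard, Nat.pred_succ]
          · have hsum_erase := Multiset.sum_erase ha
            omega
      _ = ((m + 2) * h + s.sum) * m ! := by
          rw [Multiset.sum_map_mul_right, Multiset.sum_map_add, Multiset.map_const',
            Multiset.sum_replicate, Multiset.map_id', hcard, smul_eq_mul]
      _ = (h + 1) * (m + 1)! := by
          rw [Nat.factorial_succ, ← mul_assoc]
          congr 1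
          linarith

theorem sum_map_pred_add_card (s : Multiset ℕ) :
    (s.map fun a ↦ a - 1).sum + s.card = s.sum + s.count 0 := by
  induction s using Multiset.induction_on with
  | empty => rfl
  | cons a s ih => cases a <;> simp <;> omega

theorem card_isPrimeDyckPath_mul_countFactorial (hcard : s.card = m + 2)
    (hsum : s.sum = m + 2) :
    #{L ∈ arrangements s | IsPrimeDyckPath (pathOfBlocks L)} * countFactorial s =
      s.count 0 * m ! := by
  rw [card_filter_arrangements_mul_countFactorial (Multiset.card_pos.1 (hcard ▸ (m + 1).succ_pos))]
  have hterm : ∀ a ∈ s, #{L ∈ arrangements (s.erase a) | IsPrimeDyckPath (pathOfBlocks (a :: L))} *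
      countFactorial (s.erase a) = (a - 1) * m ! := by
    rintro (_ | a) ha
    · simp [not_isPrimeDyckPath_pathOfBlocks_zero_cons]
    · simp only [isPrimeDyckPath_pathOfBlocks_succ_cons]
      refine card_firstPassage_mul_countFactorial ?_ ?_
      · rw [Multiset.card_erase_of_mem ha, hcard, Nat.pred_succ]
      · have hsum_erase := Multiset.sum_erase ha
        omega
  have hpred := sum_map_pred_add_card s
  rw [Multiset.map_congr rfl hterm, Multiset.sum_map_mul_right]
  congr 1
  omega

end Counting

section AscentType

theorem eq_of_card_eq_of_count_succ_eq {s t : Multiset ℕ} (hcard : s.card = t.card)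
    (hcount : ∀ x, s.count (x + 1) = t.count (x + 1)) : s = t := by
  have hpos : s.filter (¬0 = ·) = t.filter (¬0 = ·) := by
    ext (_ | x) <;> simp [hcount]
  have hzero (u : Multiset ℕ) : u.card = u.count 0 + (u.filter (¬0 = ·)).card := by
    rw [← Multiset.countP_eq_card_filter]
    exact Multiset.card_eq_countP_add_countP (0 = ·) u
  ext (_ | x)
  · rw [hzero s, hzero t, hpos] at hcard
    exact Nat.add_right_cancel hcard
  · exact hcount x

/-- The multiset of the blocks of a Dyck path of length `2n` and ascent type `r`: the part `i + 1`
has multiplicity `r i`, and zeros bring the number of blocks up to `n`. -/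
def ascentBlocks (n : ℕ) (r : Fin n → ℕ) : Multiset ℕ :=
  Multiset.replicate (n - ∑ i, r i) 0 + ∑ i : Fin n, Multiset.replicate (r i) (i.1 + 1)

variable {n : ℕ} {r : Fin n → ℕ}

theorem count_zero_ascentBlocks : (ascentBlocks n r).count 0 = n - ∑ i, r i := by
  simp [ascentBlocks, Multiset.count_sum', Multiset.count_replicate]

theorem count_succ_ascentBlocks (i : Fin n) : (ascentBlocks n r).count (i.1 + 1) = r i := by
  simp [ascentBlocks, Multiset.count_sum', Multiset.count_replicate, Fin.val_inj]

theorem card_ascentBlocks (hr : ∑ i, r i ≤ n) : (ascentBlocks n r).card = n := by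
  simp [ascentBlocks, Nat.sub_add_cancel hr]

theorem sum_ascentBlocks : (ascentBlocks n r).sum = ∑ i, (i.1 + 1) * r i := by
  simp [ascentBlocks, Multiset.sum_sum, mul_comm]

theorem le_of_mem_ascentBlocks {x : ℕ} (hx : x ∈ ascentBlocks n r) : x ≤ n := by
  simp only [ascentBlocks, Multiset.mem_add, Multiset.mem_sum, Multiset.mem_replicate] at hx
  obtain ⟨-, rfl⟩ | ⟨i, -, -, rfl⟩ := hx
  · exact n.zero_le
  · exact i.isLt

theorem countFactorial_ascentBlocks :
    countFactorial (ascentBlocks n r) = (n - ∑ i, r i)! * ∏ i, (r i)! := by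
  have hsub : (ascentBlocks n r).toFinset ⊆ Finset.range (n + 1) := fun x hx ↦
    Finset.mem_range_succ_iff.2 (le_of_mem_ascentBlocks (Multiset.mem_toFinset.1 hx))
  rw [countFactorial_eq_prod hsub, Finset.prod_range_succ',
    ← Fin.prod_univ_eq_prod_range fun i ↦ ((ascentBlocks n r).count (i + 1))!, mul_comm]
  simp only [count_zero_ascentBlocks, count_succ_ascentBlocks]

theorem mem_arrangements_ascentBlocks_iff (hrv : ∑ i, (i.1 + 1) * r i = n) (hr : ∑ i, r i ≤ n)
    {L : List ℕ} : L ∈ arrangements (ascentBlocks n r) ↔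
      L.length = n ∧ L.sum = n ∧ ∀ i : Fin n, L.count (i.1 + 1) = r i := by
  rw [mem_arrangements]
  constructor
  · intro hL
    refine ⟨?_, ?_, fun i ↦ ?_⟩
    · rw [← Multiset.coe_card, hL, card_ascentBlocks hr]
    · rw [← Multiset.sum_coe, hL, sum_ascentBlocks, hrv]
    · rw [← Multiset.coe_count, hL, count_succ_ascentBlocks]
  · rintro ⟨hlength, hsum, hcount⟩
    refine eq_of_card_eq_of_count_succ_eq ?_ fun x ↦ ?_
    · rw [Multiset.coe_card, hlength, card_ascentBlocks hr]
    rcases lt_or_ge x n with hx | hx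
    · rw [Multiset.coe_count]
      exact (hcount ⟨x, hx⟩).trans (count_succ_ascentBlocks ⟨x, hx⟩).symm
    · have hL : x + 1 ∉ L := fun h ↦ by
        have hle := List.le_sum_of_mem h
        omega
      have hr' : x + 1 ∉ ascentBlocks n r := fun h ↦ (le_of_mem_ascentBlocks h).not_gt (by omega)
      rw [Multiset.coe_count, List.count_eq_zero_of_not_mem hL,
        Multiset.count_eq_zero_of_notMem hr']

theorem length_pathOfBlocks_eq_and_hasAscentType_iff (hrv : ∑ i, (i.1 + 1) * r i = n)
    (hr : ∑ i, r i ≤ n) {L : List ℕ} (hL : IsPrimeDyckPath (pathOfBlocks L)) :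
    (pathOfBlocks L).length = 2 * n ∧ HasAscentType n (pathOfBlocks L) r ↔
      L ∈ arrangements (ascentBlocks n r) := by
  have hbalance := hL.count_eq_count
  have htotal := (pathOfBlocks L).count_true_add_count_false
  rw [count_false_pathOfBlocks, count_true_pathOfBlocks] at hbalance htotal
  rw [mem_arrangements_ascentBlocks_iff hrv hr, hasAscentType_pathOfBlocks, ← and_assoc]
  refine and_congr_left' ?_
  omega

theorem card_dyck_no_returns_eq_card_arrangements (hn : 0 < n) (hrv : ∑ i, (i.1 + 1) * r i = n)
    (hr : ∑ i, r i ≤ n) :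
    Nat.card {l : List Bool // IsDyckPath n l ∧ HasAscentType n l r ∧
        ∀ k, 0 < k → k < 2 * n → (l.take k).count true ≠ (l.take k).count false} =
      #{L ∈ arrangements (ascentBlocks n r) | IsPrimeDyckPath (pathOfBlocks L)} := by
  rw [← Finset.card_image_of_injective _ pathOfBlocks_injective]
  refine Nat.subtype_card _ fun l ↦ ?_
  rw [and_left_comm, isDyckPath_and_no_returns_iff hn, Finset.mem_image]
  simp only [Finset.mem_filter]
  constructor
  · rintro ⟨L, ⟨hL, hprime⟩, rfl⟩
    obtain ⟨hlength, htype⟩ :=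
      (length_pathOfBlocks_eq_and_hasAscentType_iff hrv hr hprime).2 hL
    exact ⟨htype, hprime, hlength⟩
  · rintro ⟨htype, hprime, hlength⟩
    obtain ⟨L, rfl⟩ := hprime.exists_pathOfBlocks
    exact ⟨L, ⟨(length_pathOfBlocks_eq_and_hasAscentType_iff hrv hr hprime).1 ⟨hlength, htype⟩,
      hprime⟩, rfl⟩

end AscentType

/-- The number `N` of Dyck paths of length `2n` with no returns and ascent type `r` satisfies
`N · (n - |r| - 1)! · r! = (n - 2)!`.  (A return is a proper nonempty prefix with equally
many U's and D's.) -/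
theorem card_dyck_no_returns_of_ascent_type (n : ℕ) (hn : 1 < n) (r : Fin n → ℕ)
    (hrv : ∑ i, (i.1 + 1) * r i = n) (hr : ∑ i, r i < n) :
    Nat.card {l : List Bool // IsDyckPath n l ∧ HasAscentType n l r ∧
        ∀ k, 0 < k → k < 2 * n → (l.take k).count true ≠ (l.take k).count false} *
      (n - (∑ i, r i) - 1).factorial * ∏ i, (r i).factorial = (n - 2).factorial := by
  have hzeros : 0 < n - ∑ i, r i := Nat.sub_pos_of_lt hr
  have hcount := card_isPrimeDyckPath_mul_countFactorial (m := n - 2) (s := ascentBlocks n r)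
    (by rw [card_ascentBlocks hr.le]; omega) (by rw [sum_ascentBlocks, hrv]; omega)
  rw [countFactorial_ascentBlocks, count_zero_ascentBlocks,
    ← card_dyck_no_returns_eq_card_arrangements (by omega) hrv hr.le,
    ← Nat.mul_factorial_pred hzeros.ne'] at hcount
  refine Nat.eq_of_mul_eq_mul_left hzeros (Eq.trans ?_ hcount)
  ring
end

section
/- Let n, m ≥ 1 and let r = (r_1, …, r_n) ∈ ℕ^n satisfy r_1 + 2r_2 + ⋯ + n·r_n = n, |r| := r_1 + ⋯ + r_n < n, and m ≤ |r| and m < n. Then the number N of nonnesting set partitions of [n] of type r with exactly m connected components satisfies N · (n − |r| − 1)! · (|r| − m)! · r_1! r_2! ⋯ r_n! = m · (n − m − 1)! · (|r| − 1)!. -/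
/-!
In a nonnesting partition an element that is not the least one of its block must join the
unfinished block that has waited longest since its last element, for otherwise the arc leaving
that block would nest an arc ending at this element. So the partition is run by a queue, and it
is determined by the word over `{1, …, n}` that has the size of each block at its least element
and `0` elsewhere. Read with steps `a - 1`, these words are the Łukasiewicz paths from `0` to `0`;
the height after `i` steps counts the elements after `i` in blocks that start at or before `i`, so
the visits to `0` before the end are the start and the cuts.

To count these paths by their letters, with equal letters distinguished, start them more generally
at height `h`. Moving the letter that follows the first visit to `0` to the front removes this
visit, so all visits but the final one can be removed one after another. By the ballot theorem a
proportion `h / N` of the words of length `N` has no visit but the final one.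
-/

open scoped Nat Finset

section Words

variable {α : Type*} [DecidableEq α]

lemma multiset_eq_of_card_eq_of_count_eq {s t : Multiset α} (a : α) (hcard : s.card = t.card)
    (hcount : ∀ b ≠ a, s.count b = t.count b) : s = t := by
  have hfilter : s.filter (· ≠ a) = t.filter (· ≠ a) := by
    ext b
    simp only [Multiset.count_filter]
    split_ifs with hb
    exacts [hcount b hb, rfl]
  rw [← Multiset.filter_add_not (· = a) s, ← Multiset.filter_add_not (· = a) t, hfilter,
    Multiset.card_add, Multiset.card_add, Nat.add_right_cancel_iff] at hcard
  rw [← Multiset.filter_add_not (· = a) s, ← Multiset.filter_add_not (· = a) t, hfilter,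
    Multiset.filter_eq', Multiset.filter_eq']
  rw [Multiset.filter_eq', Multiset.filter_eq', Multiset.card_replicate,
    Multiset.card_replicate] at hcard
  rw [hcard]

lemma prod_factorial_count_erase {R : Multiset α} {a : α} (ha : a ∈ R) :
    ∏ x ∈ R.toFinset, (R.count x)! =
      R.count a * ∏ x ∈ (R.erase a).toFinset, ((R.erase a).count x)! := by
  have hsub : (R.erase a).toFinset ⊆ R.toFinset :=
    Multiset.toFinset_subset.2 (Multiset.erase_subset a R)
  rw [Finset.prod_subset hsub fun x _ hx => by
      rw [Multiset.count_eq_zero_of_notMem (by simpa using hx), Nat.factorial_zero],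
    ← Finset.mul_prod_erase _ _ (Multiset.mem_toFinset.2 ha),
    ← Finset.mul_prod_erase (a := a) _ _ (Multiset.mem_toFinset.2 ha), ← mul_assoc,
    Multiset.count_erase_self, Nat.mul_factorial_pred (Multiset.count_pos.2 ha).ne']
  congr 1
  refine Finset.prod_congr rfl fun x hx => ?_
  rw [Multiset.count_erase_of_ne (Finset.ne_of_mem_erase hx)]

lemma sum_map_sum_map_erase_comm (R : Multiset α) (f : α → α → ℕ) :
    (R.map fun a => ((R.erase a).map fun b => f a b).sum).sum =
      (R.map fun b => ((R.erase b).map fun a => f a b).sum).sum := by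
  have add_diag (g : α → α → ℕ) : (R.map fun a => ((R.erase a).map (g a)).sum).sum +
      (R.map fun a => g a a).sum = (R.map fun a => (R.map (g a)).sum).sum := by
    rw [← Multiset.sum_map_add]
    refine congrArg Multiset.sum (Multiset.map_congr rfl fun a ha => ?_)
    rw [add_comm, Multiset.sum_map_erase (f := g a) ha]
  have h := add_diag f
  rw [Multiset.sum_map_sum_map, ← add_diag fun b a => f a b] at h
  exact Nat.add_right_cancel h

open Classical in
/-- The number of words satisfying `p` that are spelled with the letters `R`, when equal letters
are made distinguishable: each word is counted once for every permutation of its equal letters.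
Unlike the plain count, this one satisfies a recursion without multiplicities. -/
noncomputable def labelledWordCount (R : Multiset α) (p : List α → Prop) : ℕ :=
  #{l ∈ R.lists.toFinset | p l} * ∏ x ∈ R.toFinset, (R.count x)!

open Classical in
lemma card_words_eq_sum_erase {R : Multiset α} (hR : R ≠ 0) (p : List α → Prop) :
    #{l ∈ R.lists.toFinset | p l} =
      ∑ a ∈ R.toFinset, #{l ∈ (R.erase a).lists.toFinset | p (a :: l)} := by
  rw [← Finset.card_sigma]
  symm
  refine Finset.card_bij (fun x _ => x.1 :: x.2) ?_ ?_ ?_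
  · rintro ⟨a, l⟩ h
    simp only [Finset.mem_sigma, Finset.mem_filter, Multiset.mem_toFinset, Multiset.mem_lists_iff,
      Multiset.quot_mk_to_coe] at h ⊢
    exact ⟨by rw [← Multiset.cons_erase h.1, h.2.1, Multiset.cons_coe], h.2.2⟩
  · rintro ⟨a, l⟩ _ ⟨b, l'⟩ _ h
    obtain ⟨rfl, rfl⟩ := List.cons.inj h
    rfl
  · intro l h
    simp only [Finset.mem_filter, Multiset.mem_toFinset, Multiset.mem_lists_iff,
      Multiset.quot_mk_to_coe] at h
    obtain ⟨rfl, hl⟩ := h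
    cases l with
    | nil => exact absurd rfl hR
    | cons a l => exact ⟨⟨a, l⟩, by simp [hl], rfl⟩

lemma labelledWordCount_eq_sum_erase {R : Multiset α} (hR : R ≠ 0) (p : List α → Prop) :
    labelledWordCount R p =
      (R.map fun a => labelledWordCount (R.erase a) fun l => p (a :: l)).sum := by
  rw [labelledWordCount, card_words_eq_sum_erase hR, Finset.sum_mul,
    Finset.sum_multiset_map_count]
  refine Finset.sum_congr rfl fun a ha => ?_
  rw [prod_factorial_count_erase (Multiset.mem_toFinset.1 ha), labelledWordCount, smul_eq_mul,
    mul_left_comm]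

lemma labelledWordCount_eq_zero (R : Multiset α) {p : List α → Prop} (hp : ∀ l, ¬ p l) :
    labelledWordCount R p = 0 := by
  simp [labelledWordCount, hp]

open Classical in
lemma labelledWordCount_zero (p : List α → Prop) :
    labelledWordCount 0 p = if p [] then 1 else 0 := by
  have hlists : (0 : Multiset α).lists.toFinset = {[]} := by
    ext l
    simp [Multiset.mem_lists_iff, eq_comm (a := (0 : Multiset α))]
  rw [labelledWordCount, hlists, Finset.filter_singleton]
  split_ifs <;> simp

end Words

section Lukasiewicz

/-- `l` spells a Łukasiewicz path (the letter `a` is a step of height `a - 1`) that starts at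
height `h`, never goes below `0`, ends at `0` and visits `0` exactly `v` times before its end.
The height after `i` steps is `h + (l.take i).sum - i`; the conditions are written without the
truncated subtraction. -/
def IsLukasiewiczWord (h v : ℕ) (l : List ℕ) : Prop :=
  (∀ i ≤ l.length, i ≤ h + (l.take i).sum) ∧ h + l.sum = l.length ∧
    #{i ∈ Finset.range l.length | h + (l.take i).sum = i} = v

lemma isLukasiewiczWord_nil_iff {h v : ℕ} : IsLukasiewiczWord h v [] ↔ h = 0 ∧ v = 0 := by
  simp [IsLukasiewiczWord, eq_comm]

lemma isLukasiewiczWord_cons_iff {h g a v : ℕ} (l : List ℕ) (hg : h + a = g + 1) :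
    IsLukasiewiczWord h (v + if h = 0 then 1 else 0) (a :: l) ↔ IsLukasiewiczWord g v l := by
  have hbelow : (∀ i ≤ (a :: l).length, i ≤ h + ((a :: l).take i).sum) ↔
      ∀ i ≤ l.length, i ≤ g + (l.take i).sum := by
    constructor
    · intro H i hi
      have := H (i + 1) (by simpa using hi)
      simp only [List.take_succ_cons, List.sum_cons] at this
      omega
    · rintro H (_ | i) hi
      · exact Nat.zero_le _
      · have := H i (by simpa using hi)
        simp only [List.take_succ_cons, List.sum_cons]
        omega
  have hvisits : #{i ∈ Finset.range (a :: l).length | h + ((a :: l).take i).sum = i} =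
      #{i ∈ Finset.range l.length | g + (l.take i).sum = i} + if h = 0 then 1 else 0 := by
    rw [Finset.card_filter, List.length_cons, Finset.sum_range_succ', Finset.card_filter]
    congr 1
    refine Finset.sum_congr rfl fun i _ => if_congr ?_ rfl rfl
    simp only [List.take_succ_cons, List.sum_cons]
    omega
  rw [IsLukasiewiczWord, IsLukasiewiczWord, hbelow, hvisits, List.sum_cons, List.length_cons,
    Nat.add_right_cancel_iff]
  exact and_congr_right fun _ => and_congr_left fun _ => by omega

lemma IsLukasiewiczWord.head_ne_zero {v a : ℕ} {l : List ℕ}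
    (hl : IsLukasiewiczWord 0 v (a :: l)) : a ≠ 0 := by
  rintro rfl
  simpa using hl.1 1 (by simp)

lemma not_isLukasiewiczWord_zero_zero_cons (a : ℕ) (l : List ℕ) :
    ¬ IsLukasiewiczWord 0 0 (a :: l) := by
  rintro ⟨-, -, h⟩
  rw [Finset.card_eq_zero] at h
  simpa using Finset.filter_eq_empty_iff.1 h (x := 0) (by simp)

/-- The number of Łukasiewicz words from height `h` with `v` visits to `0` and letters `R`, equal
letters being distinguished. -/
noncomputable def lukasiewiczCount (R : Multiset ℕ) (h v : ℕ) : ℕ :=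
  labelledWordCount R (IsLukasiewiczWord h v)

lemma lukasiewiczCount_zero_zero {R : Multiset ℕ} (hR : R ≠ 0) : lukasiewiczCount R 0 0 = 0 := by
  rw [lukasiewiczCount, labelledWordCount_eq_sum_erase hR]
  simp [labelledWordCount_eq_zero _ (not_isLukasiewiczWord_zero_zero_cons _)]

lemma lukasiewiczCount_empty (h v : ℕ) :
    lukasiewiczCount 0 h v = if h = 0 ∧ v = 0 then 1 else 0 := by
  simp [lukasiewiczCount, labelledWordCount_zero, isLukasiewiczWord_nil_iff]

lemma lukasiewiczCount_succ (R : Multiset ℕ) (h v : ℕ) :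
    lukasiewiczCount R (h + 1) v =
      (R.map fun a => lukasiewiczCount (R.erase a) (h + a) v).sum := by
  obtain rfl | hR := eq_or_ne R 0
  · simp [lukasiewiczCount_empty]
  have hcons (a : ℕ) (l : List ℕ) :
      IsLukasiewiczWord (h + 1) v (a :: l) ↔ IsLukasiewiczWord (h + a) v l :=
    isLukasiewiczWord_cons_iff (h := h + 1) l (by omega)
  simp only [lukasiewiczCount, labelledWordCount_eq_sum_erase hR, hcons]

lemma lukasiewiczCount_zero_succ (R : Multiset ℕ) (v : ℕ) :
    lukasiewiczCount R 0 (v + 1) =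
      (R.map fun a => if a = 0 then 0 else lukasiewiczCount (R.erase a) (a - 1) v).sum := by
  obtain rfl | hR := eq_or_ne R 0
  · simp [lukasiewiczCount_empty]
  rw [lukasiewiczCount, labelledWordCount_eq_sum_erase hR]
  refine congrArg Multiset.sum (Multiset.map_congr rfl fun a _ => ?_)
  split_ifs with ha
  · exact labelledWordCount_eq_zero _ fun l hl => hl.head_ne_zero ha
  · have hcons (l : List ℕ) :
        IsLukasiewiczWord 0 (v + 1) (a :: l) ↔ IsLukasiewiczWord (a - 1) v l :=
      isLukasiewiczWord_cons_iff (h := 0) l (by omega)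
    simp only [hcons, lukasiewiczCount]

/-- Moving the letter that follows the first visit to `0` to the front of the word is a bijection
that removes this visit. -/
lemma lukasiewiczCount_eq_sum_move_to_front (R : Multiset ℕ) (h v : ℕ) :
    lukasiewiczCount R h (v + 1) =
      (R.map fun a => if a = 0 then 0 else lukasiewiczCount (R.erase a) (h + a - 1) v).sum := by
  induction R using Multiset.strongInductionOn generalizing h with | ih R ih
  cases h with
  | zero => simpa using lukasiewiczCount_zero_succ R v
  | succ h =>
    calc lukasiewiczCount R (h + 1) (v + 1)
        = (R.map fun a => ((R.erase a).map fun b => if b = 0 then 0 else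
            lukasiewiczCount ((R.erase a).erase b) (h + a + b - 1) v).sum).sum := by
          rw [lukasiewiczCount_succ]
          exact congrArg _ (Multiset.map_congr rfl fun a ha => ih _ (Multiset.erase_lt.2 ha) _)
      _ = (R.map fun b => ((R.erase b).map fun a => if b = 0 then 0 else
            lukasiewiczCount ((R.erase a).erase b) (h + a + b - 1) v).sum).sum :=
          sum_map_sum_map_erase_comm R _
      _ = _ := by
          refine congrArg _ (Multiset.map_congr rfl fun b _ => ?_)
          split_ifs with hb
          · simp
          · rw [show h + 1 + b - 1 = h + b - 1 + 1 by omega, lukasiewiczCount_succ]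
            refine congrArg _ (Multiset.map_congr rfl fun a _ => ?_)
            rw [Multiset.erase_comm, show h + a + b - 1 = h + b - 1 + a by omega]

/-- The ballot theorem for Łukasiewicz paths: a proportion `h / R.card` of all the words hits `0`
only at its end. -/
lemma lukasiewiczCount_zero_right {R : Multiset ℕ} {h N : ℕ} (hN : R.card = N + 1)
    (hsum : h + R.sum = R.card) : lukasiewiczCount R h 0 = h * N ! := by
  have hR : R ≠ 0 := by rintro rfl; simp at hN
  induction N generalizing R h with
  | zero =>
    obtain ⟨a, rfl⟩ := Multiset.card_eq_one.1 hN
    obtain ⟨rfl, rfl⟩ | ⟨rfl, rfl⟩ : h = 0 ∧ a = 1 ∨ h = 1 ∧ a = 0 := by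
      simp only [Multiset.sum_singleton, Multiset.card_singleton] at hsum
      omega
    · simp [lukasiewiczCount_zero_zero]
    · simp [lukasiewiczCount_succ, lukasiewiczCount_empty]
  | succ N ih =>
    cases h with
    | zero => rw [lukasiewiczCount_zero_zero hR, zero_mul]
    | succ h =>
      have hterm : ∀ a ∈ R, lukasiewiczCount (R.erase a) (h + a) 0 = (h + a) * N ! := by
        intro a ha
        have hcard := Multiset.card_erase_add_one ha
        have hsum_erase := Multiset.sum_erase ha
        have hcard' : (R.erase a).card = N + 1 := by omega
        refine ih hcard' (by omega) ?_
        rintro h0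
        simp [h0] at hcard'
      have htotal : h * (N + 2) + R.sum = (h + 1) * (N + 1) := by
        linarith
      rw [lukasiewiczCount_succ, Multiset.map_congr rfl hterm, Multiset.sum_map_mul_right,
        Multiset.sum_map_add, Multiset.map_const', Multiset.sum_replicate, Multiset.map_id', hN,
        smul_eq_mul, mul_comm _ h, htotal, Nat.factorial_succ, mul_assoc]

lemma sum_map_ite_mul_add {R : Multiset ℕ} {h k t : ℕ} (C D : ℕ) (hzero : R.count 0 = t + 1)
    (hcard : R.card = k + 1 + (t + 1)) (hsum : h + R.sum = R.card) :
    (R.map fun a => if a = 0 then 0 else C * (h + a - 1) + D).sum =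
      C * (h * k + (t + 1)) + D * (k + 1) := by
  -- Terms are moved across the equation so that no truncated subtraction of sums occurs.
  have htotal (R : Multiset ℕ) : (R.map fun a => if a = 0 then 0 else C * (h + a - 1) + D).sum +
      C * R.card + (C * h + D) * R.count 0 =
        C * R.sum + (C * h + D) * R.card + C * R.count 0 := by
    induction R using Multiset.induction_on with
    | empty => simp
    | cons a R ih =>
      simp only [Multiset.map_cons, Multiset.sum_cons, Multiset.card_cons, Multiset.count_cons]
      cases a with
      | zero =>
        simp only [if_true]
        linarith
      | succ d =>
        rw [if_neg d.succ_ne_zero, if_neg d.succ_ne_zero.symm,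
          show h + (d + 1) - 1 = h + d by omega]
        linarith
  have hR := htotal R
  have hCsum := congrArg (C * ·) hsum
  simp only [hzero, hcard] at hR hCsum
  linarith

lemma lukasiewiczCount_mul_factorial {R : Multiset ℕ} {h v j t : ℕ} (hzero : R.count 0 = t + 1)
    (hcard : R.card = v + 1 + j + (t + 1)) (hsum : h + R.sum = R.card) :
    lukasiewiczCount R h (v + 1) * j ! =
      (j + t)! * (v + j)! * (h * j + (v + 1) * (t + 1)) := by
  induction v generalizing R h with
  | zero =>
    have hterm : ∀ a ∈ R, (if a = 0 then 0 else lukasiewiczCount (R.erase a) (h + a - 1) 0) =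
        if a = 0 then 0 else (j + t)! * (h + a - 1) + 0 := by
      intro a ha
      refine ite_congr rfl (fun _ => rfl) fun ha0 => ?_
      have := Multiset.card_erase_add_one ha
      have := Multiset.sum_erase ha
      rw [lukasiewiczCount_zero_right (N := j + t) (by omega) (by omega), mul_comm, add_zero]
    rw [lukasiewiczCount_eq_sum_move_to_front, Multiset.map_congr rfl hterm,
      sum_map_ite_mul_add (k := j) _ _ hzero (by omega) hsum]
    ring_nf
  | succ v ih =>
    have hterm : ∀ a ∈ R,
        (if a = 0 then 0 else lukasiewiczCount (R.erase a) (h + a - 1) (v + 1)) * j ! =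
          if a = 0 then 0 else (j + t)! * (v + j)! * j * (h + a - 1) +
            (j + t)! * (v + j)! * ((v + 1) * (t + 1)) := by
      intro a ha
      rw [ite_mul, zero_mul]
      refine ite_congr rfl (fun _ => rfl) fun ha0 => ?_
      have := Multiset.card_erase_add_one ha
      have := Multiset.sum_erase ha
      rw [ih (by rw [Multiset.count_erase_of_ne (Ne.symm ha0), hzero]) (by omega) (by omega)]
      ring
    rw [lukasiewiczCount_eq_sum_move_to_front, ← Multiset.sum_map_mul_right,
      Multiset.map_congr rfl hterm,
      sum_map_ite_mul_add (k := v + 1 + j) _ _ hzero (by omega) hsum,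
      show v + 1 + j = v + j + 1 by omega, Nat.factorial_succ]
    ring

end Lukasiewicz

section Fifo

variable {n i j x y p : ℕ} {b b' w : ℕ → ℕ}

/-- If `b` labels every element of `ℕ` by its block, this is the number of elements of
`{1, …, i}` in the block `x`. -/
def classCard (b : ℕ → ℕ) (i x : ℕ) : ℕ :=
  #{z ∈ Finset.Icc 1 i | b z = x}

lemma classCard_zero (b : ℕ → ℕ) (x : ℕ) : classCard b 0 x = 0 := rfl

lemma classCard_succ (b : ℕ → ℕ) (i x : ℕ) :
    classCard b (i + 1) x = classCard b i x + if b (i + 1) = x then 1 else 0 := by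
  simp only [classCard, Finset.card_filter]
  exact Finset.sum_Icc_succ_top (by omega) _

lemma classCard_mono (b : ℕ → ℕ) (x : ℕ) (hij : i ≤ j) : classCard b i x ≤ classCard b j x :=
  Finset.card_le_card (Finset.filter_subset_filter _ (Finset.Icc_subset_Icc_right hij))

lemma classCard_congr (h : Set.EqOn b b' (Finset.Icc 1 i)) (x : ℕ) :
    classCard b i x = classCard b' i x :=
  congrArg Finset.card (Finset.filter_congr fun z hz => by rw [h hz])

lemma classCard_lt_classCard (hij : i < j) (hj : b j = x) (hjn : j ≤ n) :
    classCard b i x < classCard b n x := by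
  refine lt_of_lt_of_le ?_ (classCard_mono b x hjn)
  obtain ⟨k, rfl⟩ := Nat.exists_eq_add_of_lt hij
  rw [classCard_succ, if_pos hj]
  exact Nat.lt_succ_of_le (classCard_mono b x (by omega))

lemma exists_mem_Ioc_of_classCard_lt (h : classCard b i x < classCard b j x) :
    ∃ y ∈ Finset.Ioc i j, b y = x := by
  obtain ⟨y, hy, hyi⟩ := Finset.exists_mem_notMem_of_card_lt_card h
  simp only [Finset.mem_filter, Finset.mem_Icc] at hy hyi
  exact ⟨y, Finset.mem_Ioc.2 ⟨by omega, hy.1.2⟩, hy.2⟩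

/-- `b` sends every element of `{1, …, n}` to the least element of its block, for some set
partition of `{1, …, n}`. -/
def IsMinLabelling (n : ℕ) (b : ℕ → ℕ) : Prop :=
  ∀ y ∈ Finset.Icc 1 n, b y ∈ Finset.Icc 1 y ∧ b (b y) = b y

lemma IsMinLabelling.sum_classCard (hb : IsMinLabelling n b) (i : ℕ) :
    ∑ x ∈ Finset.Icc 1 i, classCard b n x = #{y ∈ Finset.Icc 1 n | b y ≤ i} := by
  rw [Finset.card_eq_sum_card_fiberwise (f := b) (t := Finset.Icc 1 i)]
  · refine Finset.sum_congr rfl fun x hx => ?_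
    rw [classCard, Finset.filter_filter]
    refine congrArg Finset.card (Finset.filter_congr fun y _ => ?_)
    have := (Finset.mem_Icc.1 hx).2
    constructor <;> grind
  · intro y hy
    simp only [Finset.coe_filter, Set.mem_ofPred_eq] at hy
    exact Finset.mem_coe.2 (Finset.mem_Icc.2 ⟨(Finset.mem_Icc.1 (hb y hy.1).1).1, hy.2⟩)

lemma IsMinLabelling.sum_classCard_self (hb : IsMinLabelling n b) :
    ∑ x ∈ Finset.Icc 1 n, classCard b n x = n := by
  rw [hb.sum_classCard, Finset.filter_true_of_mem, Nat.card_Icc, Nat.add_sub_cancel]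
  intro y hy
  exact (Finset.mem_Icc.1 (hb y hy).1).2.trans (Finset.mem_Icc.1 hy).2

lemma IsMinLabelling.classCard_eq_zero_iff (hb : IsMinLabelling n b) (hx : x ∈ Finset.Icc 1 n) :
    classCard b n x = 0 ↔ b x ≠ x := by
  rw [classCard, Finset.card_eq_zero, Finset.filter_eq_empty_iff]
  refine ⟨fun h => h hx, ?_⟩
  rintro h y hy rfl
  exact h (hb y hy).2

/-- The last elements in `{1, …, i}` of the blocks that have fewer than their prescribed number
`w x` of elements there; `x` is the label of the block. -/
def openEnds (w b : ℕ → ℕ) (i : ℕ) : Set ℕ :=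
  {p | p ∈ Finset.Icc 1 i ∧ (∀ z ∈ Finset.Ioc p i, b z ≠ b p) ∧ classCard b i (b p) < w (b p)}

lemma openEnds_congr (h : Set.EqOn b b' (Finset.Icc 1 i)) : openEnds w b i = openEnds w b' i := by
  ext p
  refine and_congr_right fun hp => ?_
  rw [h hp, classCard_congr h]
  refine and_congr_left' (forall₂_congr fun z hz => ?_)
  rw [h]
  simp only [Finset.mem_Ioc, Finset.mem_Icc, Finset.coe_Icc, Set.mem_Icc] at hz hp ⊢
  omega

/-- The labelling `b` of `{1, …, n}` by block minima is produced by a queue: `w x` is `0` if `x`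
does not start a block and the size of the block started by `x` otherwise, and an element that
does not start a block joins the unfinished block that has waited longest since it last
received an element. -/
structure IsFifo (w b : ℕ → ℕ) (n : ℕ) : Prop where
  opening : ∀ i < n, w (i + 1) ≠ 0 → b (i + 1) = i + 1
  serving : ∀ i < n, w (i + 1) = 0 → ∃ p, IsLeast (openEnds w b i) p ∧ b (i + 1) = b p

lemma IsFifo.mono {k : ℕ} (h : IsFifo w b n) (hk : k ≤ n) : IsFifo w b k :=
  ⟨fun i hi => h.opening i (hi.trans_le hk), fun i hi => h.serving i (hi.trans_le hk)⟩

lemma IsFifo.succ (h : IsFifo w b n) (hopen : w (n + 1) ≠ 0 → b (n + 1) = n + 1)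
    (hserve : w (n + 1) = 0 → ∃ p, IsLeast (openEnds w b n) p ∧ b (n + 1) = b p) :
    IsFifo w b (n + 1) :=
  ⟨Nat.forall_lt_succ_right.2 ⟨h.opening, hopen⟩, Nat.forall_lt_succ_right.2 ⟨h.serving, hserve⟩⟩

lemma IsFifo.congr (h : IsFifo w b n) (hbb' : Set.EqOn b b' (Finset.Icc 1 n)) :
    IsFifo w b' n where
  opening i hi hw := by
    rw [← hbb' (Finset.mem_Icc.2 (by omega)), h.opening i hi hw]
  serving i hi hw := by
    obtain ⟨p, hp, hbp⟩ := h.serving i hi hw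
    have hsub : Set.EqOn b b' (Finset.Icc 1 i) :=
      hbb'.mono (Finset.coe_subset.2 (Finset.Icc_subset_Icc_right hi.le))
    refine ⟨p, openEnds_congr hsub ▸ hp, ?_⟩
    rw [← hbb' (Finset.mem_Icc.2 (by omega)), ← hsub hp.1.1, hbp]

lemma IsFifo.eqOn (h : IsFifo w b n) (h' : IsFifo w b' n) : Set.EqOn b b' (Finset.Icc 1 n) := by
  induction n with
  | zero => simp
  | succ n ih =>
    have hn : Set.EqOn b b' (Finset.Icc 1 n) := ih (h.mono n.le_succ) (h'.mono n.le_succ)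
    intro y hy
    obtain hyn | rfl := (Finset.mem_Icc.1 hy).2.lt_or_eq
    · exact hn (Finset.mem_Icc.2 ⟨(Finset.mem_Icc.1 hy).1, by omega⟩)
    by_cases hw : w (n + 1) = 0
    · obtain ⟨p, hp, hbp⟩ := h.serving n n.lt_succ_self hw
      obtain ⟨q, hq, hbq⟩ := h'.serving n n.lt_succ_self hw
      rw [← openEnds_congr hn] at hq
      rw [hbp, hbq, hp.unique hq, hn hq.1.1]
    · rw [h.opening n n.lt_succ_self hw, h'.opening n n.lt_succ_self hw]

lemma IsFifo.isMinLabelling (h : IsFifo w b n) : IsMinLabelling n b := by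
  induction n with
  | zero => simp [IsMinLabelling]
  | succ n ih =>
    intro y hy
    obtain rfl | hyn := (Finset.mem_Icc.1 hy).2.eq_or_lt
    · by_cases hw : w (n + 1) = 0
      · obtain ⟨p, hp, hbp⟩ := h.serving n n.lt_succ_self hw
        obtain ⟨hmem, hbb⟩ := ih (h.mono n.le_succ) p hp.1.1
        rw [hbp]
        have := (Finset.mem_Icc.1 hp.1.1).2
        refine ⟨?_, hbb⟩
        rw [Finset.mem_Icc] at hmem ⊢
        omega
      · rw [h.opening n n.lt_succ_self hw]
        exact ⟨hy, h.opening n n.lt_succ_self hw⟩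
    · exact ih (h.mono n.le_succ) y (Finset.mem_Icc.2 ⟨(Finset.mem_Icc.1 hy).1, by omega⟩)

lemma IsFifo.classCard_le (h : IsFifo w b n) (x : ℕ) : classCard b n x ≤ w x := by
  induction n with
  | zero => simp [classCard_zero]
  | succ n ih =>
    have hn := h.mono n.le_succ
    rw [classCard_succ]
    split_ifs with hx
    · by_cases hw : w (n + 1) = 0
      · obtain ⟨p, hp, hbp⟩ := h.serving n n.lt_succ_self hw
        rw [← hx, hbp]
        exact hp.1.2.2
      · obtain rfl : n + 1 = x := (h.opening n n.lt_succ_self hw).symm.trans hx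
        have hnew : classCard b n (n + 1) = 0 := by
          refine Finset.card_eq_zero.2 (Finset.filter_eq_empty_iff.2 fun y hy hby => ?_)
          have := (Finset.mem_Icc.1 (hn.isMinLabelling y hy).1).2
          have := (Finset.mem_Icc.1 hy).2
          omega
        omega
    · exact ih hn

lemma IsFifo.openEnds_nonempty (h : IsFifo w b n) (hw : n < ∑ x ∈ Finset.Icc 1 n, w x) :
    (openEnds w b n).Nonempty := by
  obtain ⟨x, hx, hlt⟩ :=
    Finset.exists_lt_of_sum_lt (h.isMinLabelling.sum_classCard_self.trans_lt hw)
  have hbx : b x = x := by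
    obtain ⟨i, rfl⟩ := Nat.exists_eq_add_of_le' (Finset.mem_Icc.1 hx).1
    exact h.opening i (Finset.mem_Icc.1 hx).2 (by omega)
  obtain ⟨p, hp, hmax⟩ := ({z ∈ Finset.Icc 1 n | b z = x}).exists_max_image id
    ⟨x, Finset.mem_filter.2 ⟨hx, hbx⟩⟩
  obtain ⟨hpn, rfl⟩ := Finset.mem_filter.1 hp
  refine ⟨p, hpn, fun z hz hbz => ?_, hlt⟩
  rw [Finset.mem_Ioc] at hz
  have : z ≤ p := hmax z (Finset.mem_filter.2 ⟨Finset.mem_Icc.2 (by omega), hbz⟩)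
  omega

lemma exists_isFifo (hw : ∀ i ≤ n, i ≤ ∑ x ∈ Finset.Icc 1 i, w x) : ∃ b, IsFifo w b n := by
  induction n with
  | zero => exact ⟨id, by simp, by simp⟩
  | succ n ih =>
    obtain ⟨b, hb⟩ := ih fun i hi => hw i (by omega)
    have extend (c : ℕ) : Set.EqOn b (Function.update b (n + 1) c) (Finset.Icc 1 n) :=
      fun z hz => (Function.update_of_ne (by have := (Finset.mem_Icc.1 hz).2; omega) _ _).symm
    by_cases h0 : w (n + 1) = 0
    · have hne : (openEnds w b n).Nonempty := by
        refine hb.openEnds_nonempty ?_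
        have := hw (n + 1) le_rfl
        rw [Finset.sum_Icc_succ_top (by omega), h0] at this
        omega
      obtain ⟨p, hp⟩ : ∃ p, IsLeast (openEnds w b n) p := ⟨_, isLeast_csInf hne⟩
      refine ⟨_, (hb.congr (extend (b p))).succ (absurd h0) fun _ =>
        ⟨p, openEnds_congr (extend (b p)) ▸ hp, ?_⟩⟩
      rw [Function.update_self, ← extend (b p) hp.1.1]
    · exact ⟨_, (hb.congr (extend (n + 1))).succ (fun _ => Function.update_self ..)
        fun hw0 => absurd hw0 h0⟩

end Fifo

section Labelling

variable {n i x y p q : ℕ} {b : ℕ → ℕ} {π ρ : SetPartitionOn n}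

/-- The least element of the block of `y`, with the junk value `0` if `y` is not in
`{1, …, n}`. -/
noncomputable def blockMin (π : SetPartitionOn n) (y : ℕ) : ℕ :=
  sInf (π.part y : Set ℕ)

lemma blockMin_mem_part (π : SetPartitionOn n) (hy : y ∈ Finset.Icc 1 n) :
    blockMin π y ∈ π.part y :=
  Nat.sInf_mem (s := (π.part y : Set ℕ)) (π.part_nonempty.2 hy)

lemma blockMin_le (hx : x ∈ π.part y) : blockMin π y ≤ x :=
  Nat.sInf_le hx

lemma mem_part_iff_blockMin_eq (hx : x ∈ Finset.Icc 1 n) (hy : y ∈ Finset.Icc 1 n) :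
    x ∈ π.part y ↔ blockMin π x = blockMin π y := by
  rw [π.mem_part_iff_part_eq_part hx hy]
  refine ⟨fun h => by rw [blockMin, h, blockMin], fun h => ?_⟩
  have hmem := blockMin_mem_part π hx
  rw [← π.part_eq_of_mem (π.part_mem.2 hx) hmem, h]
  exact π.part_eq_of_mem (π.part_mem.2 hy) (blockMin_mem_part π hy)

lemma isMinLabelling_blockMin (π : SetPartitionOn n) : IsMinLabelling n (blockMin π) := by
  intro y hy
  have hmem := blockMin_mem_part π hy
  have hIcc := π.part_subset y hmem
  exact ⟨Finset.mem_Icc.2 ⟨(Finset.mem_Icc.1 hIcc).1, blockMin_le (π.mem_part hy)⟩,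
    (mem_part_iff_blockMin_eq hIcc hy).1 hmem⟩

lemma eq_of_eqOn_blockMin (h : Set.EqOn (blockMin π) (blockMin ρ) (Finset.Icc 1 n)) : π = ρ := by
  have hpart : ∀ y ∈ Finset.Icc 1 n, π.part y = ρ.part y := by
    intro y hy
    ext x
    by_cases hx : x ∈ Finset.Icc 1 n
    · rw [mem_part_iff_blockMin_eq hx hy, mem_part_iff_blockMin_eq hx hy, h hx, h hy]
    · exact iff_of_false (fun hxy => hx (π.part_subset y hxy)) fun hxy => hx (ρ.part_subset y hxy)
  have parts_eq (σ : SetPartitionOn n) : σ.parts = (Finset.Icc 1 n).image σ.part := by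
    refine Finset.coe_injective ?_
    rw [Finset.coe_image]
    exact (σ.part_surjOn.image_eq_of_mapsTo fun y hy => σ.part_mem.2 hy).symm
  exact Finpartition.ext (by rw [parts_eq, parts_eq, Finset.image_congr hpart])

lemma IsMinLabelling.exists_eqOn_blockMin (hb : IsMinLabelling n b) :
    ∃ π : SetPartitionOn n, Set.EqOn (blockMin π) b (Finset.Icc 1 n) := by
  classical
  have hpart (x y : ℕ) : x ∈ (Finpartition.ofSetSetoid (Setoid.ker b) (Finset.Icc 1 n)).part y ↔
      y ∈ Finset.Icc 1 n ∧ x ∈ Finset.Icc 1 n ∧ b y = b x :=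
    Finpartition.mem_part_ofSetSetoid_iff_rel _
  refine ⟨Finpartition.ofSetSetoid (Setoid.ker b) (Finset.Icc 1 n), fun y hy => ?_⟩
  obtain ⟨hmem, hbb⟩ := hb y hy
  have hbn : b y ∈ Finset.Icc 1 n := Finset.Icc_subset_Icc_right (Finset.mem_Icc.1 hy).2 hmem
  refine (blockMin_le ?_).antisymm (le_csInf ?_ fun x hx => ?_)
  · exact (hpart _ _).2 ⟨hy, hbn, hbb.symm⟩
  · exact (Finpartition.part_nonempty _).2 hy
  · obtain ⟨-, hx, hxy⟩ := (hpart _ _).1 hx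
    rw [hxy]
    exact (Finset.mem_Icc.1 (hb x hx).1).2

lemma isArc_iff_s11 : IsArc π x y ↔ x < y ∧ x ∈ Finset.Icc 1 n ∧ y ∈ Finset.Icc 1 n ∧
    blockMin π x = blockMin π y ∧ ∀ z ∈ Finset.Ioo x y, blockMin π z ≠ blockMin π y := by
  constructor
  · rintro ⟨hxy, B, hB, hxB, hyB, hbetween⟩
    have hx := π.le hB hxB
    have hy := π.le hB hyB
    obtain rfl := π.part_eq_of_mem hB hyB
    refine ⟨hxy, hx, hy, (mem_part_iff_blockMin_eq hx hy).1 hxB, fun z hz hzy => ?_⟩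
    have hzn : z ∈ Finset.Icc 1 n := by
      simp only [Finset.mem_Icc, Finset.mem_Ioo] at *
      omega
    exact hbetween z ((mem_part_iff_blockMin_eq hzn hy).2 hzy) (Finset.mem_Ioo.1 hz)
  · rintro ⟨hxy, hx, hy, hb, hbetween⟩
    refine ⟨hxy, π.part y, π.part_mem.2 hy, (mem_part_iff_blockMin_eq hx hy).2 hb,
      π.mem_part hy, fun z hz hzxy => hbetween z (Finset.mem_Ioo.2 hzxy) ?_⟩
    exact (mem_part_iff_blockMin_eq (π.part_subset y hz) hy).1 hz

lemma IsArc.left_unique (hp : IsArc π p y) (hq : IsArc π q y) : p = q := by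
  obtain ⟨hpy, -, -, hbp, hp⟩ := isArc_iff_s11.1 hp
  obtain ⟨hqy, -, -, hbq, hq⟩ := isArc_iff_s11.1 hq
  rcases lt_trichotomy p q with h | h | h
  exacts [absurd hbq (hp q (Finset.mem_Ioo.2 ⟨h, hqy⟩)), h,
    absurd hbp (hq p (Finset.mem_Ioo.2 ⟨h, hpy⟩))]

lemma exists_isArc_of_blockMin_ne (hy : y ∈ Finset.Icc 1 n) (hby : blockMin π y ≠ y) :
    ∃ p, IsArc π p y := by
  obtain ⟨hmem, hbb⟩ := isMinLabelling_blockMin π y hy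
  obtain ⟨p, hp, hmax⟩ :=
    ({z ∈ Finset.Icc 1 (y - 1) | blockMin π z = blockMin π y}).exists_max_image id
      ⟨blockMin π y, by simp only [Finset.mem_filter, Finset.mem_Icc] at *; omega⟩
  simp only [Finset.mem_filter, Finset.mem_Icc] at hp hy
  refine ⟨p, isArc_iff_s11.2 ⟨by omega, Finset.mem_Icc.2 (by omega), Finset.mem_Icc.2 hy, hp.2,
    fun z hz hzy => ?_⟩⟩
  rw [Finset.mem_Ioo] at hz
  have : z ≤ p := hmax z (Finset.mem_filter.2 ⟨Finset.mem_Icc.2 (by omega), hzy⟩)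
  omega

lemma mem_openEnds_blockMin_iff {w : ℕ → ℕ}
    (hw : ∀ x ∈ Finset.Icc 1 n, w x = classCard (blockMin π) n x) (hi : i ≤ n) :
    p ∈ openEnds w (blockMin π) i ↔ p ≤ i ∧ ∃ y, i < y ∧ IsArc π p y := by
  have hwp (hp : p ∈ Finset.Icc 1 n) :
      w (blockMin π p) = classCard (blockMin π) n (blockMin π p) :=
    hw _ (π.part_subset p (blockMin_mem_part π hp))
  constructor
  · rintro ⟨hp, hlast, hlt⟩
    have hpn : p ∈ Finset.Icc 1 n := Finset.Icc_subset_Icc_right hi hp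
    rw [hwp hpn] at hlt
    have hnext := exists_mem_Ioc_of_classCard_lt hlt
    obtain ⟨hy, hby⟩ := Nat.find_spec hnext
    rw [Finset.mem_Icc] at hp
    rw [Finset.mem_Ioc] at hy
    refine ⟨hp.2, Nat.find hnext, hy.1, isArc_iff_s11.2 ⟨by omega, hpn, Finset.mem_Icc.2 (by omega),
      hby.symm, fun z hz => ?_⟩⟩
    rw [Finset.mem_Ioo] at hz
    rw [hby]
    obtain hzi | hzi := le_or_gt z i
    · exact hlast z (Finset.mem_Ioc.2 ⟨hz.1, hzi⟩)
    · exact fun hbz => Nat.find_min hnext hz.2 ⟨Finset.mem_Ioc.2 (by omega), hbz⟩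
  · rintro ⟨hpi, y, hiy, harc⟩
    obtain ⟨-, hp, hy, hb, hbetween⟩ := isArc_iff_s11.1 harc
    refine ⟨Finset.mem_Icc.2 ⟨(Finset.mem_Icc.1 hp).1, hpi⟩, fun z hz => ?_, ?_⟩
    · rw [hb]
      exact hbetween z (Finset.mem_Ioo.2 (by rw [Finset.mem_Ioc] at hz; omega))
    · rw [hwp hp]
      exact classCard_lt_classCard hiy hb.symm (Finset.mem_Icc.1 hy).2

lemma Nonnesting.isFifo {w : ℕ → ℕ} (hπ : Nonnesting π)
    (hw : ∀ x ∈ Finset.Icc 1 n, w x = classCard (blockMin π) n x) :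
    IsFifo w (blockMin π) n where
  opening i hi h0 := by
    have hmem : i + 1 ∈ Finset.Icc 1 n := Finset.mem_Icc.2 (by omega)
    rw [hw _ hmem] at h0
    by_contra hne
    exact h0 (((isMinLabelling_blockMin π).classCard_eq_zero_iff hmem).2 hne)
  serving i hi h0 := by
    have hmem : i + 1 ∈ Finset.Icc 1 n := Finset.mem_Icc.2 (by omega)
    rw [hw _ hmem, (isMinLabelling_blockMin π).classCard_eq_zero_iff hmem] at h0
    obtain ⟨p, hp⟩ := exists_isArc_of_blockMin_ne hmem h0
    refine ⟨p, ⟨?_, fun q hq => ?_⟩, (isArc_iff_s11.1 hp).2.2.2.1.symm⟩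
    · exact (mem_openEnds_blockMin_iff hw hi.le).2 ⟨Nat.lt_succ_iff.1 hp.1, i + 1, by omega, hp⟩
    · obtain ⟨-, d, hid, hqd⟩ := (mem_openEnds_blockMin_iff hw hi.le).1 hq
      by_contra! hqp
      obtain rfl | hd := (Nat.succ_le_of_lt hid).eq_or_lt
      · exact hqp.ne (hqd.left_unique hp)
      · exact hπ ⟨q, p, i + 1, d, hqp, hp.1, hd, hqd, hp⟩

lemma IsFifo.nonnesting {w : ℕ → ℕ} (h : IsFifo w (blockMin π) n)
    (hw : ∀ x ∈ Finset.Icc 1 n, w x = classCard (blockMin π) n x) : Nonnesting π := by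
  rintro ⟨a, p, c, d, hap, hpc, hcd, had, hpc'⟩
  obtain ⟨-, hp, hc, hb, -⟩ := isArc_iff_s11.1 hpc'
  obtain ⟨i, rfl⟩ := Nat.exists_eq_add_of_le' (Finset.mem_Icc.1 hc).1
  have hi : i < n := (Finset.mem_Icc.1 hc).2
  have h0 : w (i + 1) = 0 := by
    rw [hw _ hc, (isMinLabelling_blockMin π).classCard_eq_zero_iff hc, ← hb]
    exact ((Finset.mem_Icc.1 (isMinLabelling_blockMin π p hp).1).2.trans_lt hpc).ne
  obtain ⟨q, ⟨hq, hleast⟩, hbq⟩ := h.serving i hi h0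
  have hqa : q ≤ a := hleast ((mem_openEnds_blockMin_iff hw hi.le).2 ⟨by omega, d, by omega, had⟩)
  exact hq.2.1 p (Finset.mem_Ioc.2 (by omega)) (hb.trans hbq)

lemma isCut_iff {i : ℕ} : IsCut π i ↔
    i ∈ Finset.Ico 1 n ∧ ∀ y ∈ Finset.Icc 1 n, blockMin π y ≤ i → y ≤ i := by
  rw [IsCut, ← and_assoc, Finset.mem_Ico]
  refine and_congr (by omega) ⟨fun h y hy hyi => ?_, fun h B hB => ?_⟩
  · refine (h _ (π.part_mem.2 hy)).elim (fun hle => hle y (π.mem_part hy)) fun hlt => ?_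
    exact absurd (hlt _ (blockMin_mem_part π hy)) hyi.not_gt
  · refine or_iff_not_imp_left.2 fun hle x hx => ?_
    push Not at hle
    obtain ⟨y, hyB, hiy⟩ := hle
    obtain rfl := π.part_eq_of_mem hB hyB
    by_contra! hxi
    exact (h y (π.le hB hyB) ((blockMin_le hx).trans hxi)).not_gt hiy

end Labelling

section BlockSizeWord

variable {n v : ℕ} {π ρ : SetPartitionOn n}

lemma sum_take_map_range' {i : ℕ} (w : ℕ → ℕ) (hi : i ≤ n) :
    (((List.range' 1 n).map w).take i).sum = ∑ x ∈ Finset.Icc 1 i, w x := by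
  rw [← List.map_take, List.take_range'_of_length_ge hi]
  rfl

lemma isLukasiewiczWord_map_range'_iff {h : ℕ} (w : ℕ → ℕ) :
    IsLukasiewiczWord h v ((List.range' 1 n).map w) ↔
      (∀ i ≤ n, i ≤ h + ∑ x ∈ Finset.Icc 1 i, w x) ∧ h + ∑ x ∈ Finset.Icc 1 n, w x = n ∧
        #{i ∈ Finset.range n | h + ∑ x ∈ Finset.Icc 1 i, w x = i} = v := by
  rw [IsLukasiewiczWord, List.length_map, List.length_range']
  refine and_congr (forall₂_congr fun i hi => by rw [sum_take_map_range' w hi])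
    (and_congr Iff.rfl ?_)
  rw [Finset.filter_congr fun i hi => by rw [sum_take_map_range' w (Finset.mem_range.1 hi).le]]

/-- The word whose `x`-th letter is the size of the block of `π` with least element `x`, or `0`
if there is no such block. -/
noncomputable def blockSizeWord (π : SetPartitionOn n) : List ℕ :=
  (List.range' 1 n).map (classCard (blockMin π) n)

lemma length_blockSizeWord (π : SetPartitionOn n) : (blockSizeWord π).length = n := by
  simp [blockSizeWord]

lemma Icc_subset_filter_blockMin_le {i : ℕ} (π : SetPartitionOn n) (hi : i ≤ n) :
    Finset.Icc 1 i ⊆ {y ∈ Finset.Icc 1 n | blockMin π y ≤ i} := by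
  intro y hy
  have hyn := Finset.Icc_subset_Icc_right hi hy
  have hby := (Finset.mem_Icc.1 (isMinLabelling_blockMin π y hyn).1).2
  exact Finset.mem_filter.2 ⟨hyn, hby.trans (Finset.mem_Icc.1 hy).2⟩

lemma le_card_blockMin_le {i : ℕ} (π : SetPartitionOn n) (hi : i ≤ n) :
    i ≤ #{y ∈ Finset.Icc 1 n | blockMin π y ≤ i} := by
  simpa using Finset.card_le_card (Icc_subset_filter_blockMin_le π hi)

lemma isCut_iff_card_blockMin_le {i : ℕ} :
    IsCut π i ↔ i ∈ Finset.Ico 1 n ∧ #{y ∈ Finset.Icc 1 n | blockMin π y ≤ i} = i := by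
  rw [isCut_iff]
  refine and_congr_right fun hi => ⟨fun h => ?_, fun h y hy hyi => ?_⟩
  · refine le_antisymm ?_ (le_card_blockMin_le π (Finset.mem_Ico.1 hi).2.le)
    have hsub : {y ∈ Finset.Icc 1 n | blockMin π y ≤ i} ⊆ Finset.Icc 1 i := by
      intro y hy
      obtain ⟨hyn, hyi⟩ := Finset.mem_filter.1 hy
      exact Finset.mem_Icc.2 ⟨(Finset.mem_Icc.1 hyn).1, h y hyn hyi⟩
    simpa using Finset.card_le_card hsub
  · have heq := Finset.eq_of_subset_of_card_le
      (Icc_subset_filter_blockMin_le π (Finset.mem_Ico.1 hi).2.le) (by simp [h])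
    exact (Finset.mem_Icc.1 (heq ▸ Finset.mem_filter.2 ⟨hy, hyi⟩ : y ∈ Finset.Icc 1 i)).2

lemma isLukasiewiczWord_blockSizeWord_iff (hn : 1 ≤ n) :
    IsLukasiewiczWord 0 v (blockSizeWord π) ↔ cutCount π + 1 = v := by
  have hb := isMinLabelling_blockMin π
  have hreturns : (({i ∈ Finset.range n |
      #{y ∈ Finset.Icc 1 n | blockMin π y ≤ i} = i} : Finset ℕ) : Set ℕ) =
        insert 0 {i | IsCut π i} := by
    ext i
    simp only [Finset.coe_filter, Finset.mem_range, Set.mem_ofPred_eq, Set.mem_insert_iff,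
      isCut_iff_card_blockMin_le, Finset.mem_Ico]
    obtain rfl | hi := eq_or_ne i 0
    · refine iff_of_true ⟨hn, Finset.card_eq_zero.2 (Finset.filter_eq_empty_iff.2 ?_)⟩ (Or.inl rfl)
      exact fun y hy => (Finset.mem_Icc.1 (hb y hy).1).1.not_gt ∘ Nat.lt_succ_of_le
    · rw [or_iff_right hi, Nat.one_le_iff_ne_zero, and_iff_right hi]
  have hfinite : {i | IsCut π i}.Finite :=
    (Finset.finite_toSet _).subset (hreturns ▸ Set.subset_insert 0 _)
  have hcard := congrArg Set.ncard hreturns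
  rw [Set.ncard_coe_finset,
    Set.ncard_insert_of_notMem (fun h => absurd h.1 (by simp)) hfinite] at hcard
  simp only [blockSizeWord, isLukasiewiczWord_map_range'_iff, zero_add, hb.sum_classCard_self,
    hb.sum_classCard, hcard]
  exact ⟨fun h => h.2.2, fun h => ⟨fun i hi => le_card_blockMin_le π hi, trivial, h⟩⟩

lemma Nonnesting.eq_of_blockSizeWord_eq (hπ : Nonnesting π) (hρ : Nonnesting ρ)
    (h : blockSizeWord π = blockSizeWord ρ) : π = ρ := by
  have hw : ∀ x ∈ Finset.Icc 1 n, classCard (blockMin π) n x = classCard (blockMin ρ) n x :=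
    List.map_inj_left.1 h
  exact eq_of_eqOn_blockMin ((hπ.isFifo fun _ _ => rfl).eqOn (hρ.isFifo hw))

lemma exists_nonnesting_blockSizeWord_eq {l : List ℕ} (hlen : l.length = n)
    (hl : IsLukasiewiczWord 0 v l) :
    ∃ π : SetPartitionOn n, Nonnesting π ∧ blockSizeWord π = l := by
  obtain ⟨w, rfl⟩ : ∃ w : ℕ → ℕ, l = (List.range' 1 n).map w := by
    refine ⟨fun x => l.getD (x - 1) 0, List.ext_getElem (by simp [hlen]) fun i hi _ => ?_⟩
    simp [List.getElem?_eq_getElem hi]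
  simp only [isLukasiewiczWord_map_range'_iff, zero_add] at hl
  obtain ⟨b, hb⟩ := exists_isFifo hl.1
  obtain ⟨π, hπ⟩ := hb.isMinLabelling.exists_eqOn_blockMin
  have hsum : ∑ x ∈ Finset.Icc 1 n, classCard b n x = ∑ x ∈ Finset.Icc 1 n, w x := by
    rw [hb.isMinLabelling.sum_classCard_self, hl.2.1]
  have hw : ∀ x ∈ Finset.Icc 1 n, w x = classCard (blockMin π) n x := by
    intro x hx
    rw [classCard_congr hπ]
    exact ((Finset.sum_eq_sum_iff_of_le fun x _ => hb.classCard_le x).1 hsum x hx).symm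
  refine ⟨π, (hb.congr hπ.symm).nonnesting hw, List.map_congr_left fun x hx => ?_⟩
  exact (hw x hx).symm

lemma card_part_eq_classCard {y : ℕ} (hy : y ∈ Finset.Icc 1 n) :
    #(π.part y) = classCard (blockMin π) n (blockMin π y) := by
  refine congrArg Finset.card (Finset.ext fun z => ?_)
  rw [Finset.mem_filter]
  by_cases hz : z ∈ Finset.Icc 1 n
  · rw [mem_part_iff_blockMin_eq hz hy, and_iff_right hz]
  · exact iff_of_false (fun hzy => hz (π.part_subset y hzy)) fun hzy => hz hzy.1

lemma count_blockSizeWord {k : ℕ} (π : SetPartitionOn n) (hk : k ≠ 0) :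
    (blockSizeWord π).count k = #{B ∈ π.parts | #B = k} := by
  have hb := isMinLabelling_blockMin π
  have hcount : (blockSizeWord π).count k =
      #{x ∈ Finset.Icc 1 n | classCard (blockMin π) n x = k} := by
    rw [blockSizeWord, List.count, List.countP_map, List.countP_eq_length_filter]
    rfl
  have hmin : ∀ x ∈ {x ∈ Finset.Icc 1 n | classCard (blockMin π) n x = k}, blockMin π x = x := by
    intro x hx
    obtain ⟨hxn, hxk⟩ := Finset.mem_filter.1 hx
    by_contra hne
    exact hk (hxk.symm.trans ((hb.classCard_eq_zero_iff hxn).2 hne))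
  rw [hcount]
  refine Finset.card_nbij π.part (fun x hx => ?_) (fun x hx y hy hxy => ?_) fun B hB => ?_
  · obtain ⟨hxn, hxk⟩ := Finset.mem_filter.1 hx
    refine Finset.mem_filter.2 ⟨π.part_mem.2 hxn, ?_⟩
    rw [card_part_eq_classCard hxn, hmin x hx, hxk]
  · rw [← hmin x hx, ← hmin y hy, blockMin, hxy, blockMin]
  · obtain ⟨hB, hBk⟩ := Finset.mem_filter.1 hB
    obtain ⟨y, hyB⟩ := π.nonempty_of_mem_parts hB
    obtain rfl := π.part_eq_of_mem hB hyB
    have hy := π.le hB hyB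
    have hmem := blockMin_mem_part π hy
    refine ⟨blockMin π y, Finset.mem_filter.2 ⟨π.part_subset y hmem, ?_⟩,
      π.part_eq_of_mem hB hmem⟩
    rw [← card_part_eq_classCard hy, hBk]

/-- The letters of the block size word of a set partition of type `r`. -/
def typeLetters (r : Fin n → ℕ) : Multiset ℕ :=
  Multiset.replicate (n - ∑ i, r i) 0 + ∑ i : Fin n, Multiset.replicate (r i) (i.1 + 1)

variable {r : Fin n → ℕ}

lemma card_typeLetters (hr : ∑ i, r i ≤ n) : (typeLetters r).card = n := by
  simp [typeLetters, Nat.sub_add_cancel hr]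

lemma sum_typeLetters (r : Fin n → ℕ) : (typeLetters r).sum = ∑ i, (i.1 + 1) * r i := by
  simp [typeLetters, Multiset.sum_sum, mul_comm]

lemma count_zero_typeLetters (r : Fin n → ℕ) : (typeLetters r).count 0 = n - ∑ i, r i := by
  simp [typeLetters, Multiset.count_sum', Multiset.count_replicate]

lemma count_succ_typeLetters (r : Fin n → ℕ) (i : Fin n) :
    (typeLetters r).count (i.1 + 1) = r i := by
  simp [typeLetters, Multiset.count_sum', Multiset.count_replicate, Fin.val_inj]

lemma count_typeLetters_of_lt {k : ℕ} (r : Fin n → ℕ) (hk : n < k) :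
    (typeLetters r).count k = 0 := by
  have hne (i : Fin n) : i.1 + 1 ≠ k := by omega
  have hk0 : 0 ≠ k := by omega
  simp [typeLetters, Multiset.count_sum', Multiset.count_replicate, hne, hk0]

lemma prod_factorial_count_typeLetters (r : Fin n → ℕ) :
    ∏ x ∈ (typeLetters r).toFinset, ((typeLetters r).count x)! =
      (n - ∑ i, r i)! * ∏ i, (r i)! := by
  have hsub : (typeLetters r).toFinset ⊆ Finset.range (n + 1) := by
    intro k hk
    by_contra hkn
    rw [Finset.mem_range, not_lt] at hkn
    exact Multiset.count_ne_zero.2 (Multiset.mem_toFinset.1 hk) (count_typeLetters_of_lt r hkn)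
  rw [Finset.prod_subset hsub fun x _ hx => by
      rw [Multiset.count_eq_zero_of_notMem (by simpa using hx), Nat.factorial_zero],
    Finset.prod_range_succ', Finset.prod_range, count_zero_typeLetters, mul_comm]
  simp only [count_succ_typeLetters]

lemma hasType_iff_blockSizeWord (hr : ∑ i, r i ≤ n) :
    HasType π r ↔ (blockSizeWord π : Multiset ℕ) = typeLetters r := by
  constructor
  · intro h
    refine multiset_eq_of_card_eq_of_count_eq 0 ?_ fun k hk => ?_
    · rw [Multiset.coe_card, length_blockSizeWord, card_typeLetters hr]
    · rw [Multiset.coe_count, count_blockSizeWord π hk]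
      obtain ⟨i, rfl⟩ := Nat.exists_eq_add_one_of_ne_zero hk
      obtain hi | hi := lt_or_ge i n
      · exact (h ⟨i, hi⟩).trans (count_succ_typeLetters r ⟨i, hi⟩).symm
      · rw [count_typeLetters_of_lt r (by omega), Finset.card_eq_zero,
          Finset.filter_eq_empty_iff]
        intro B hB hcard
        have hle := Finset.card_le_card (π.le hB)
        rw [Nat.card_Icc] at hle
        omega
  · intro h i
    rw [← count_succ_typeLetters r i, ← h, Multiset.coe_count,
      count_blockSizeWord π i.1.succ_ne_zero]

lemma bijOn_blockSizeWord (hn : 1 ≤ n) (hr : ∑ i, r i ≤ n) :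
    Set.BijOn blockSizeWord
      {π : SetPartitionOn n | Nonnesting π ∧ HasType π r ∧ cutCount π = v}
      {l : List ℕ | typeLetters r = l ∧ IsLukasiewiczWord 0 (v + 1) l} := by
  refine ⟨fun π hπ => ?_, fun π hπ ρ hρ h => hπ.1.eq_of_blockSizeWord_eq hρ.1 h, ?_⟩
  · exact ⟨((hasType_iff_blockSizeWord hr).1 hπ.2.1).symm,
      (isLukasiewiczWord_blockSizeWord_iff hn).2 (congrArg (· + 1) hπ.2.2)⟩
  · rintro l ⟨hletters, hl⟩
    have hlen : l.length = n := by rw [← Multiset.coe_card, ← hletters, card_typeLetters hr]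
    obtain ⟨π, hπ, rfl⟩ := exists_nonnesting_blockSizeWord_eq hlen hl
    exact ⟨π, ⟨hπ, (hasType_iff_blockSizeWord hr).2 hletters.symm,
      Nat.add_right_cancel ((isLukasiewiczWord_blockSizeWord_iff hn).1 hl)⟩, rfl⟩

lemma card_nonnesting_mul_factorial (hn : 1 ≤ n) (hr : ∑ i, r i ≤ n) :
    Nat.card {π : SetPartitionOn n // Nonnesting π ∧ HasType π r ∧ cutCount π = v} *
      ((n - ∑ i, r i)! * ∏ i, (r i)!) = lukasiewiczCount (typeLetters r) 0 (v + 1) := by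
  classical
  have hcard := (bijOn_blockSizeWord (v := v) hn hr).ncard_eq
  have hwords : {l : List ℕ | typeLetters r = l ∧ IsLukasiewiczWord 0 (v + 1) l} =
      ({l ∈ (typeLetters r).lists.toFinset | IsLukasiewiczWord 0 (v + 1) l} : Finset (List ℕ)) := by
    ext l
    simp [Multiset.mem_lists_iff]
  rw [hwords, Set.ncard_coe_finset, ← Nat.card_coe_set_eq] at hcard
  rw [lukasiewiczCount, labelledWordCount, prod_factorial_count_typeLetters]
  exact congrArg (· * _) hcard

end BlockSizeWord

/-- The number `N` of nonnesting partitions of `[n]` of type `r` with exactly `m` connected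
components satisfies `N · (n - |r| - 1)! · (|r| - m)! · r! = m · (n - m - 1)! · (|r| - 1)!`. -/
theorem card_nonnesting_of_type_components (n m : ℕ) (hn : 1 ≤ n) (hm : 1 ≤ m)
    (r : Fin n → ℕ) (hrv : ∑ i, (i.1 + 1) * r i = n) (hr : ∑ i, r i < n)
    (hmr : m ≤ ∑ i, r i) (hmn : m < n) :
    Nat.card {π : SetPartitionOn n // Nonnesting π ∧ HasType π r ∧ cutCount π = m - 1} *
        (n - (∑ i, r i) - 1).factorial * ((∑ i, r i) - m).factorial * ∏ i, (r i).factorial =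
      m * (n - m - 1).factorial * ((∑ i, r i) - 1).factorial := by
  obtain ⟨v, rfl⟩ := Nat.exists_eq_add_of_le' hm
  obtain ⟨j, hj⟩ := Nat.exists_eq_add_of_le hmr
  obtain ⟨t, ht⟩ := Nat.exists_eq_add_of_lt hr
  have hcount : (typeLetters r).count 0 = t + 1 := by rw [count_zero_typeLetters]; omega
  have hcard : (typeLetters r).card = n := card_typeLetters hr.le
  have hwords := lukasiewiczCount_mul_factorial (h := 0) (v := v) (j := j) hcount (by omega)
    (by rw [zero_add, hcard, sum_typeLetters, hrv])
  rw [← card_nonnesting_mul_factorial hn hr.le, show n - ∑ i, r i = t + 1 by omega,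
    Nat.factorial_succ] at hwords
  rw [show v + 1 - 1 = v by omega, show n - ∑ i, r i - 1 = t by omega,
    show ∑ i, r i - (v + 1) = j by omega, show n - (v + 1) - 1 = j + t by omega,
    show ∑ i, r i - 1 = v + j by omega]
  refine Nat.eq_of_mul_eq_mul_left t.succ_pos ?_
  linarith
end
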